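/- arXiv:2403.03381 — 2 statements merged into one kernel-verified Lean document; each statement's English description precedes it below -/
import Mathlib

section
/- For every natural number α ∈ {8β : β ∈ {9} ∪ {12, 13, ..., 83} ∪ {85, 90, 93}}, there exists a near-extremal ternary self-dual code C of length 36 whose number of codewords of Hamming weight 9 equals α. -/
/-- `C` is a self-dual ternary code of length 36: it coincides with its orthogonal
complement with respect to the standard dot product on `(ZMod 3)^36`. -/
def IsSelfDualCode (C : Submodule (ZMod 3) (Fin 36 → ZMod 3)) : Prop :=
  ∀ x : Fin 36 → ZMod 3, x ∈ C ↔ ∀ y ∈ C, ∑ i, x i * y i = 0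

/-- The minimum (Hamming) weight of `C` is 9, i.e. `C` is near-extremal. -/
def MinWeightNine (C : Submodule (ZMod 3) (Fin 36 → ZMod 3)) : Prop :=
  IsLeast {w : ℕ | ∃ x ∈ C, x ≠ 0 ∧ hammingNorm x = w} 9

/-- The number of codewords of `C` of Hamming weight exactly 9. -/
noncomputable def A9 (C : Submodule (ZMod 3) (Fin 36 → ZMod 3)) : ℕ :=
  Nat.card {x : Fin 36 → ZMod 3 // x ∈ C ∧ hammingNorm x = 9}

section Lanes

/-- strict evaluation of a natural number, then continue -/
def fc {α : Type} (n : ℕ) (k : ℕ → α) : α := Nat.rec (k 0) (fun m _ => k (Nat.succ m)) n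

theorem fc_eq {α : Type} (n : ℕ) (k : ℕ → α) : fc n k = k n := by
  cases n <;> rfl

/-- lanes of one weight class: number of lanes and the three value masks -/
structure Tr where
  l : ℕ
  z : ℕ
  p : ℕ
  n : ℕ

def cat (x l a m b : ℕ) : ℕ := Nat.add x (Nat.shiftLeft (Nat.add a (Nat.shiftLeft b m)) l)

noncomputable def upd {α : Type} (v : ℕ) (s t : Tr) (k : Tr → α) : α :=
  Tr.rec (fun m z p n => Tr.rec (fun l z' p' n' =>
    fc (Nat.add l (Nat.add m m)) fun l2 =>
    Nat.rec
      (fc (cat z' l z m z) fun a => fc (cat p' l p m p) fun b =>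
        fc (cat n' l n m n) fun c => k ⟨l2, a, b, c⟩)
      (fun w _ => Nat.rec
        (fc (cat z' l n m p) fun a => fc (cat p' l z m n) fun b =>
          fc (cat n' l p m z) fun c => k ⟨l2, a, b, c⟩)
        (fun _ _ =>
         fc (cat z' l p m n) fun a => fc (cat p' l n m z) fun b =>
          fc (cat n' l z m p) fun c => k ⟨l2, a, b, c⟩) w) v) t) s

def t0 : Tr := ⟨1, 1, 0, 0⟩
def te : Tr := ⟨0, 0, 0, 0⟩

noncomputable def loop {α : Type} (f : ℕ → ℕ) (k : Tr → Tr → Tr → Tr → α) :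
    ℕ → ℕ → Tr → Tr → Tr → Tr → α
  | 0, _, a, b, c, d => k a b c d
  | m+1, i, a, b, c, d => fc (f i) fun v =>
     upd v t0 a fun a' => upd v a b fun b' => upd v b c fun c' => upd v c d fun d' =>
     loop f k m (Nat.succ i) a' b' c' d'

def addB {α : Type} : List ℕ → ℕ → (List ℕ → α) → α
  | [], _, k => k []
  | c :: cs, x, k => fc (Nat.xor c x) fun c' => fc (Nat.land c x) fun x' =>
      addB cs x' fun r => k (c' :: r)

def eqm {α : Type} (ones : ℕ) : List ℕ → ℕ → (ℕ → α) → α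
  | [], _, k => k ones
  | c :: cs, m, k => eqm ones cs (m / 2) fun r =>
      fc (Nat.land (bif Nat.beq (m % 2) 1 then c else Nat.xor ones c) r) k

def kc : ℕ → ℕ → ℕ → ℕ
  | 0, _, _ => 100000
  | m+1, e, acc => bif Nat.beq e 0 then acc else
      fc (Nat.land e (Nat.sub e 1)) fun e' => fc (Nat.succ acc) fun acc' => kc m e' acc'

/-- no lane has a value in the list -/
def noVal (ones : ℕ) (pl : List ℕ) : List ℕ → Bool
  | [] => true
  | m :: ms => eqm ones pl m fun e => bif Nat.beq e 0 then noVal ones pl ms else false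

noncomputable def cols {α : Type} (f : ℕ → ℕ → ℕ)
    (k : List ℕ → List ℕ → List ℕ → List ℕ → α) :
    ℕ → ℕ → List ℕ → List ℕ → List ℕ → List ℕ → α
  | 0, _, a, b, c, d => k a b c d
  | m+1, j, a, b, c, d =>
     loop (f j) (fun s1 s2 s3 s4 =>
       fc (Nat.add s1.p s1.n) fun x1 => fc (Nat.add s2.p s2.n) fun x2 =>
       fc (Nat.add s3.p s3.n) fun x3 => fc (Nat.add s4.p s4.n) fun x4 =>
       addB a x1 fun a' => addB b x2 fun b' => addB c x3 fun c' => addB d x4 fun d' =>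
       cols f k m (Nat.succ j) a' b' c' d') 18 0 te te te te

def z5 : List ℕ := [0, 0, 0, 0, 0]

def fin1 (len : ℕ) (pl : List ℕ) (bad : List ℕ) (t : ℕ) (k : ℕ → Bool) : Bool :=
  fc (2 ^ len - 1) fun ones =>
  bif noVal ones pl bad then eqm ones pl t fun e => fc (kc 1000 e 0) k else false

noncomputable def side (f : ℕ → ℕ → ℕ) (k : ℕ → Bool) : Bool :=
  cols f (fun a b c d =>
    fin1 36 a [0, 1, 2, 3, 4, 5, 6, 7, 9, 10, 12, 13, 15, 16, 18] 8 fun n1 =>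
    fin1 612 b [0, 1, 2, 3, 4, 5, 6, 8, 9, 11, 12, 14, 15, 17, 18] 7 fun n2 =>
    fin1 6528 c [0, 1, 2, 3, 4, 5] 6 fun n3 =>
    fin1 48960 d [0, 1, 2, 3, 4] 5 fun n4 => k (n1 + n2 + n3 + n4)) 18 0 z5 z5 z5 z5

def ent (d i j : ℕ) : ℕ := d / 3 ^ (18 * i + j) % 3

noncomputable def chk (d b : ℕ) : Bool :=
  side (fun c i => ent d c i) fun n => side (fun c i => ent d i c) fun n' =>
    Nat.beq (n + n') (8 * b)

/-! ### semantics -/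

def enc : List Bool → ℕ
  | [] => 0
  | b :: l => Nat.bit b (enc l)

def msk {α : Type} (l : List α) (p : α → Bool) : ℕ := enc (l.map p)

theorem enc_append (a b : List Bool) : enc (a ++ b) = enc a + 2 ^ a.length * enc b := by
  induction a with
  | nil => simp [enc]
  | cons x a ih => simp only [List.cons_append, enc, ih, Nat.bit_val, List.length_cons]; ring

theorem msk_congr {α : Type} {l : List α} {p q : α → Bool} (h : ∀ u ∈ l, p u = q u) :
    msk l p = msk l q := by
  unfold msk; rw [List.map_congr_left h]

theorem msk_append {α : Type} (a b : List α) (p : α → Bool) :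
    msk (a ++ b) p = msk a p + 2 ^ a.length * msk b p := by
  simp [msk, enc_append]

theorem msk_map {α β : Type} (a : List α) (g : α → β) (p : β → Bool) :
    msk (a.map g) p = msk a (fun u => p (g u)) := by
  simp [msk, Function.comp_def]

theorem msk_and {α : Type} (l : List α) (p q : α → Bool) :
    Nat.land (msk l p) (msk l q) = msk l (fun u => p u && q u) := by
  change msk l p &&& msk l q = _
  induction l with
  | nil => simp [msk, enc]
  | cons x a ih =>
    simp only [msk, List.map_cons, enc] at ih ⊢
    rw [Nat.land_bit, ih]

theorem msk_xor {α : Type} (l : List α) (p q : α → Bool) :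
    Nat.xor (msk l p) (msk l q) = msk l (fun u => xor (p u) (q u)) := by
  change msk l p ^^^ msk l q = _
  induction l with
  | nil => simp [msk, enc]
  | cons x a ih =>
    simp only [msk, List.map_cons, enc] at ih ⊢
    rw [Nat.xor_bit, ih]

theorem msk_add {α : Type} (l : List α) (p q : α → Bool) (h : ∀ u, (p u && q u) = false) :
    Nat.add (msk l p) (msk l q) = msk l (fun u => p u || q u) := by
  change msk l p + msk l q = _
  induction l with
  | nil => simp [msk, enc]
  | cons x a ih =>
    simp only [msk, List.map_cons, enc, Nat.bit_val] at ih ⊢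
    rw [← ih]
    have := h x
    cases hp : p x <;> cases hq : q x <;> simp_all <;> omega

theorem msk_false {α : Type} (l : List α) : msk l (fun _ => false) = 0 := by
  induction l with
  | nil => simp [msk, enc]
  | cons x a ih =>
    simp only [msk, List.map_cons, enc, Nat.bit_val] at ih ⊢
    rw [ih]; rfl

theorem msk_true {α : Type} (l : List α) : 2 ^ l.length - 1 = msk l (fun _ => true) := by
  suffices msk l (fun _ => true) + 1 = 2 ^ l.length by omega
  induction l with
  | nil => simp [msk, enc]
  | cons x a ih =>
    simp only [msk, List.map_cons, enc, Nat.bit_val, List.length_cons] at ih ⊢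
    rw [pow_succ, ← ih]; simp; ring

theorem msk_zero {α : Type} (l : List α) (p : α → Bool) (h : msk l p = 0) :
    ∀ u ∈ l, p u = false := by
  induction l with
  | nil => simp
  | cons x a ih =>
    simp only [msk, List.map_cons, enc, Nat.bit_val] at ih h
    have h1 : enc (a.map p) = 0 := by omega
    have h2 : (p x).toNat = 0 := by omega
    intro u hu
    rcases List.mem_cons.1 hu with rfl | hu
    · simpa using h2
    · exact ih h1 u hu

theorem enc_kern (l : List Bool) (h : enc l ≠ 0) :
    ∃ l', enc l' = Nat.land (enc l) (Nat.sub (enc l) 1) ∧ l'.count true + 1 = l.count true := by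
  change ∃ l', enc l' = enc l &&& (enc l - 1) ∧ _
  induction l with
  | nil => simp [enc] at h
  | cons b l ih =>
    cases b with
    | true =>
      refine ⟨false :: l, ?_, by simp⟩
      have : enc (true :: l) - 1 = Nat.bit false (enc l) := by simp [enc, Nat.bit_val]
      rw [this]; simp only [enc]; rw [Nat.land_bit]; simp
    | false =>
      have h0 : enc l ≠ 0 := by simpa [enc, Nat.bit_val] using h
      obtain ⟨l', h1, h2⟩ := ih h0
      refine ⟨false :: l', ?_, by simpa using h2⟩
      have : enc (false :: l) - 1 = Nat.bit true (enc l - 1) := by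
        simp [enc, Nat.bit_val]; omega
      rw [this]; simp only [enc]; rw [Nat.land_bit, h1]; simp

theorem enc_count_zero (l : List Bool) (h : enc l = 0) : l.count true = 0 := by
  have := msk_zero l id (by simpa [msk] using h)
  rw [List.count_eq_zero]
  intro hh
  simpa using this _ hh

theorem kc_spec (m : ℕ) : ∀ (l : List Bool) (acc : ℕ),
    kc m (enc l) acc = l.count true + acc ∨ 100000 ≤ kc m (enc l) acc := by
  induction m with
  | zero => intro l acc; right; simp [kc]
  | succ m ih =>
    intro l acc
    by_cases h : enc l = 0
    · left; simp [kc, h, enc_count_zero l h]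
    · obtain ⟨l', h1, h2⟩ := enc_kern l h
      have hb : Nat.beq (enc l) 0 = false := by
        cases hh : Nat.beq (enc l) 0 with
        | false => rfl
        | true => exact absurd (Nat.eq_of_beq_eq_true hh) h
      have : kc (m+1) (enc l) acc = kc m (enc l') (acc + 1) := by
        simp only [kc, fc_eq, hb, cond_false, h1]
      rw [this]
      rcases ih l' (acc+1) with h3 | h3
      · left; omega
      · right; exact h3

def planes {α : Type} (l : List α) : (α → ℕ) → ℕ → List ℕ
  | _, 0 => []
  | w, n+1 => msk l (fun u => decide (w u % 2 = 1)) :: planes l (fun u => w u / 2) n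

theorem planes_congr {α : Type} (l : List α) (n : ℕ) : ∀ (w w' : α → ℕ), (∀ u, w u = w' u) →
    planes l w n = planes l w' n := by
  intro w w' h
  rw [funext h]

theorem planes_zero {α : Type} (l : List α) : planes l (fun _ => 0) 5 = z5 := by
  simp [planes, z5, msk_false]

theorem bit_add_mod (n : ℕ) (x : Bool) :
    (xor (decide (n % 2 = 1)) x) = decide ((n + x.toNat) % 2 = 1) := by
  cases x <;> rcases Nat.mod_two_eq_zero_or_one n with h | h <;> simp [h, Nat.add_mod]

theorem bit_add_div (n : ℕ) (x : Bool) :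
    n / 2 + (decide (n % 2 = 1) && x).toNat = (n + x.toNat) / 2 := by
  cases x <;> rcases Nat.mod_two_eq_zero_or_one n with h | h <;> simp [h] <;> omega

theorem addB_spec {α β : Type} (l : List α) (n : ℕ) : ∀ (w : α → ℕ) (b : α → Bool)
    (k : List ℕ → β),
    addB (planes l w n) (msk l b) k = k (planes l (fun u => w u + (b u).toNat) n) := by
  induction n with
  | zero => intro w b k; simp [planes, addB]
  | succ n ih =>
    intro w b k
    simp only [planes, addB, fc_eq, msk_and, msk_xor, ih]
    congr 2
    · apply msk_congr; intro u _
      exact bit_add_mod _ _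
    · apply planes_congr; intro u
      exact bit_add_div _ _

theorem eqm_spec {α β : Type} (l : List α) (n : ℕ) : ∀ (w : α → ℕ) (m : ℕ) (k : ℕ → β),
    eqm (msk l fun _ => true) (planes l w n) m k =
      k (msk l fun u => decide (w u % 2 ^ n = m % 2 ^ n)) := by
  induction n with
  | zero => intro w m k; simp [planes, eqm, Nat.mod_one]
  | succ n ih =>
    intro w m k
    have key : ∀ u, (decide (w u % 2 ^ (n+1) = m % 2 ^ (n+1))) =
        (decide (w u % 2 = m % 2) && decide (w u / 2 % 2 ^ n = m / 2 % 2 ^ n)) := by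
      intro u
      rw [pow_succ', Nat.mod_mul, Nat.mod_mul, ← Bool.decide_and]
      congr 1
      apply propext
      constructor
      · intro h
        have a1 := Nat.mod_two_eq_zero_or_one (w u)
        have a2 := Nat.mod_two_eq_zero_or_one m
        constructor <;> omega
      · rintro ⟨h1, h2⟩; rw [h1, h2]
    simp only [planes, eqm, ih, fc_eq, msk_xor, key]
    rcases Nat.mod_two_eq_zero_or_one m with h | h
    · simp only [h]
      change k (Nat.land (msk l _) _) = _
      rw [msk_and]; congr 1; apply msk_congr; intro u _
      rcases Nat.mod_two_eq_zero_or_one (w u) with h | h <;> simp [h]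
    · simp only [h]
      change k (Nat.land (msk l _) _) = _
      rw [msk_and]

theorem noVal_spec {α : Type} (l : List α) (w : α → ℕ) (hw : ∀ u ∈ l, w u < 32) :
    ∀ (bad : List ℕ), (∀ m ∈ bad, m < 32) →
    noVal (msk l fun _ => true) (planes l w 5) bad = true → ∀ u ∈ l, w u ∉ bad := by
  intro bad
  induction bad with
  | nil => simp
  | cons m ms ih =>
    intro hb h u hu
    simp only [noVal, eqm_spec] at h
    cases hh : Nat.beq (msk l fun u => decide (w u % 2 ^ 5 = m % 2 ^ 5)) 0 with
    | false => rw [hh] at h; simp at h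
    | true =>
      rw [hh] at h
      have h1 := msk_zero _ _ (Nat.eq_of_beq_eq_true hh) u hu
      have h2 := ih (fun x hx => hb x (List.mem_cons_of_mem _ hx)) h u hu
      have h3 := hw u hu
      have h4 := hb m (List.mem_cons_self)
      rw [List.mem_cons, not_or]
      refine ⟨?_, h2⟩
      rintro h5
      simp [h5] at h1

theorem fin1_spec {α : Type} (l : List α) (w : α → ℕ) (hw : ∀ u ∈ l, w u < 32)
    (len : ℕ) (hl : len = l.length) (bad : List ℕ) (hb : ∀ m ∈ bad, m < 32) (t : ℕ) (ht : t < 32)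
    (k : ℕ → Bool) (h : fin1 len (planes l w 5) bad t k = true) :
    (∀ u ∈ l, w u ∉ bad) ∧
    ∃ r, (r = l.countP (fun u => decide (w u = t)) ∨ 100000 ≤ r) ∧ k r = true := by
  subst hl
  simp only [fin1, fc_eq, msk_true, eqm_spec] at h
  cases hh : noVal (msk l fun _ => true) (planes l w 5) bad with
  | false => rw [hh] at h; simp at h
  | true =>
    rw [hh] at h
    refine ⟨noVal_spec l w hw bad hb hh, _, ?_, h⟩
    rcases kc_spec 1000 (l.map fun u => decide (w u % 2 ^ 5 = t % 2 ^ 5)) 0 with h1 | h1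
    · left
      simp only [msk, h1]
      rw [List.count, List.countP_map]
      simp only [add_zero]
      apply List.countP_congr
      intro u hu
      have := hw u hu
      simp [Nat.mod_eq_of_lt this, Nat.mod_eq_of_lt ht]
    · right; exact h1

/-! ### enumeration of vectors by weight -/

def enum : (n k : ℕ) → List (Fin n → ZMod 3)
  | 0, 0 => [fun _ => 0]
  | 0, _+1 => []
  | n+1, 0 => (enum n 0).map fun u => Fin.snoc u 0
  | n+1, k+1 => (enum n (k+1)).map (fun u => Fin.snoc u 0) ++
      ((enum n k).map (fun u => Fin.snoc u 1) ++ (enum n k).map (fun u => Fin.snoc u 2))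

def dv {n : ℕ} (f : ℕ → ℕ) (u : Fin n → ZMod 3) : ZMod 3 := ∑ i, u i * (f i : ZMod 3)

theorem dv_snoc {n : ℕ} (f : ℕ → ℕ) (u : Fin n → ZMod 3) (x : ZMod 3) :
    dv f (Fin.snoc u x : Fin (n+1) → ZMod 3) = dv f u + x * (f n : ZMod 3) := by
  simp [dv, Fin.sum_univ_castSucc]

theorem enum_zero (n : ℕ) : enum n 0 = [fun _ => 0] := by
  induction n with
  | zero => rfl
  | succ n ih =>
    simp only [enum, ih, List.map_cons, List.map_nil]
    congr 1; funext i
    refine Fin.lastCases ?_ (fun i => ?_) i <;> simp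

def tr (f : ℕ → ℕ) (n k : ℕ) : Tr :=
  ⟨(enum n k).length, msk (enum n k) (fun u => decide (dv f u = 0)),
    msk (enum n k) (fun u => decide (dv f u = 1)), msk (enum n k) (fun u => decide (dv f u = 2))⟩

theorem tr_zero (f : ℕ → ℕ) (n : ℕ) : t0 = tr f n 0 := by
  have : dv f (fun _ : Fin n => (0 : ZMod 3)) = 0 := by simp [dv]
  simp only [tr, enum_zero, t0, msk, List.map_cons, List.map_nil, this, enc]
  rfl

theorem tr_empty (f : ℕ → ℕ) (k : ℕ) : te = tr f 0 (k+1) := by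
  simp [tr, enum, te, msk, enc]

theorem upd_spec {α : Type} (f : ℕ → ℕ) (n k : ℕ) (hf : f n < 3) (K : Tr → α) :
    upd (f n) (tr f n k) (tr f n (k+1)) K = K (tr f (n+1) (k+1)) := by
  have hcat : ∀ x l a m b, cat x l a m b = x + 2 ^ l * (a + 2 ^ m * b) := by
    intro x l a m b
    change x + (a + b <<< m) <<< l = _
    simp only [Nat.shiftLeft_eq]; ring
  have hadd : ∀ a b, Nat.add a b = a + b := fun _ _ => rfl
  have hlen : (enum (n+1) (k+1)).length =
      (enum n (k+1)).length + ((enum n k).length + (enum n k).length) := by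
    simp [enum]
  have d0 : ∀ x y : ZMod 3, (∀ z : ZMod 3, decide (z + x = y) = decide (z = y - x)) := by decide
  have hm : ∀ y : ZMod 3, msk (enum (n+1) (k+1)) (fun u => decide (dv f u = y)) =
      msk (enum n (k+1)) (fun u => decide (dv f u = y)) + 2 ^ (enum n (k+1)).length *
      (msk (enum n k) (fun u => decide (dv f u = y - f n)) + 2 ^ (enum n k).length *
       msk (enum n k) (fun u => decide (dv f u = y - 2 * f n))) := by
    intro y
    simp only [enum, msk_append, msk_map, dv_snoc, List.length_map, d0]
    simp
  simp only [tr, upd, hlen, hm]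
  have h3 : f n = 0 ∨ f n = 1 ∨ f n = 2 := by omega
  have e1 : (0 : ZMod 3) - 1 = 2 := by decide
  have e2 : (0 : ZMod 3) - 2 = 1 := by decide
  have e3 : (1 : ZMod 3) - 2 = 2 := by decide
  have e4 : (2 : ZMod 3) - 1 = 1 := by decide
  have e5 : (2 : ZMod 3) * 2 = 1 := by decide
  rcases h3 with h | h | h <;> simp only [h, fc_eq, hcat, hadd] <;>
    simp [e1, e2, e3, e4, e5] <;> rfl

theorem loop_spec {α : Type} (f : ℕ → ℕ) (hf : ∀ i, f i < 3) (K : Tr → Tr → Tr → Tr → α) (m : ℕ) :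
    ∀ i, loop f K m i (tr f i 1) (tr f i 2) (tr f i 3) (tr f i 4) =
      K (tr f (i+m) 1) (tr f (i+m) 2) (tr f (i+m) 3) (tr f (i+m) 4) := by
  induction m with
  | zero => intro i; simp [loop]
  | succ m ih =>
    intro i
    simp only [loop, fc_eq]
    rw [tr_zero f i, upd_spec f i 0 (hf i), upd_spec f i 1 (hf i), upd_spec f i 2 (hf i),
      upd_spec f i 3 (hf i)]
    have := ih (i+1)
    rw [show i + (m + 1) = i + 1 + m by ring, ← this]

def wv {n : ℕ} (f : ℕ → ℕ → ℕ) (j : ℕ) (u : Fin n → ZMod 3) : ℕ :=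
  ∑ c ∈ Finset.range j, (decide (dv (f c) u ≠ 0)).toNat

theorem nz_spec (f : ℕ → ℕ) (n k : ℕ) : Nat.add (tr f n k).p (tr f n k).n =
    msk (enum n k) (fun u => decide (dv f u ≠ 0)) := by
  simp only [tr]
  have d : ∀ x : ZMod 3, (decide (x = 1) && decide (x = 2)) = false := by decide
  have d' : ∀ x : ZMod 3, (decide (x = 1) || decide (x = 2)) = decide (x ≠ 0) := by decide
  rw [msk_add _ _ _ (fun u => d _)]
  simp only [d']

theorem cols_spec {α : Type} (f : ℕ → ℕ → ℕ) (hf : ∀ c i, f c i < 3)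
    (K : List ℕ → List ℕ → List ℕ → List ℕ → α) (m : ℕ) :
    ∀ j, cols f K m j (planes (enum 18 1) (wv f j) 5) (planes (enum 18 2) (wv f j) 5)
        (planes (enum 18 3) (wv f j) 5) (planes (enum 18 4) (wv f j) 5) =
      K (planes (enum 18 1) (wv f (j+m)) 5) (planes (enum 18 2) (wv f (j+m)) 5)
        (planes (enum 18 3) (wv f (j+m)) 5) (planes (enum 18 4) (wv f (j+m)) 5) := by
  induction m with
  | zero => intro j; simp [cols]
  | succ m ih =>
    intro j
    simp only [cols]
    have h1 := fun K => loop_spec (α := α) (f j) (hf j) K 18 0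
    simp only [← tr_empty] at h1
    rw [h1]
    simp only [fc_eq, nz_spec, zero_add, addB_spec]
    have hs : ∀ u : Fin 18 → ZMod 3, wv f j u + (decide (dv (f j) u ≠ 0)).toNat = wv f (j+1) u := by
      intro u; simp only [wv, Finset.sum_range_succ]
    simp only [hs]
    have := ih (j+1)
    rw [show j + (m + 1) = j + 1 + m by ring, ← this]

end Lanes

section Codes

theorem hn_eq_sum {n : ℕ} (x : Fin n → ZMod 3) :
    hammingNorm x = ∑ i, (decide (x i ≠ 0)).toNat := by
  rw [hammingNorm, Finset.card_filter]
  apply Finset.sum_congr rfl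
  intro i _
  by_cases h : x i = 0 <;> simp [h]

theorem hn_snoc {n : ℕ} (u : Fin n → ZMod 3) (x : ZMod 3) :
    hammingNorm (Fin.snoc u x : Fin (n+1) → ZMod 3) = hammingNorm u + (decide (x ≠ 0)).toNat := by
  simp only [hn_eq_sum, Fin.sum_univ_castSucc, Fin.snoc_castSucc, Fin.snoc_last]

theorem snoc_inj {n : ℕ} (x : ZMod 3) :
    Function.Injective (fun u : Fin n → ZMod 3 => (Fin.snoc u x : Fin (n+1) → ZMod 3)) := by
  intro u v h
  exact (Fin.snoc_inj.1 h).1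

theorem mem_enum (n : ℕ) : ∀ (k : ℕ) (u : Fin n → ZMod 3), u ∈ enum n k ↔ hammingNorm u = k := by
  induction n with
  | zero =>
    intro k u
    have : hammingNorm u = 0 := by simp [hn_eq_sum]
    rw [this]
    cases k with
    | zero => simp [enum]; exact Subsingleton.elim _ _
    | succ k => simp [enum]
  | succ n ih =>
    intro k u
    obtain ⟨v, x, rfl⟩ : ∃ v x, u = (Fin.snoc v x : Fin (n+1) → ZMod 3) :=
      ⟨Fin.init u, u (Fin.last n), (Fin.snoc_init_self u).symm⟩
    rw [hn_snoc]
    have hx : x = 0 ∨ x = 1 ∨ x = 2 := by revert x; decide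
    have h10 : (1 : ZMod 3) ≠ 0 := by decide
    have h20 : (2 : ZMod 3) ≠ 0 := by decide
    have h12 : (1 : ZMod 3) ≠ 2 := by decide
    cases k with
    | zero =>
      simp only [enum, List.mem_map, Fin.snoc_inj, ih]
      rcases hx with rfl | rfl | rfl <;> simp [h10, h20, h10.symm, h20.symm]
    | succ k =>
      simp only [enum, List.mem_append, List.mem_map, Fin.snoc_inj, ih]
      rcases hx with rfl | rfl | rfl <;>
        simp [h10, h20, h12, h10.symm, h20.symm, h12.symm]

theorem nodup_enum (n : ℕ) : ∀ (k : ℕ), (enum n k).Nodup := by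
  induction n with
  | zero => intro k; cases k <;> simp [enum]
  | succ n ih =>
    intro k
    have h10 : (1 : ZMod 3) ≠ 0 := by decide
    have h20 : (2 : ZMod 3) ≠ 0 := by decide
    have h12 : (1 : ZMod 3) ≠ 2 := by decide
    cases k with
    | zero => exact (ih 0).map (snoc_inj 0)
    | succ k =>
      simp only [enum]
      refine List.Nodup.append ((ih _).map (snoc_inj 0))
        (List.Nodup.append ((ih _).map (snoc_inj 1)) ((ih _).map (snoc_inj 2)) ?_) ?_
      · intro a h1 h2
        simp only [List.mem_map] at h1 h2
        obtain ⟨v, _, rfl⟩ := h1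
        obtain ⟨w, _, h⟩ := h2
        exact h12 (Fin.snoc_inj.1 h).2.symm
      · intro a h1 h2
        simp only [List.mem_map, List.mem_append] at h1 h2
        obtain ⟨v, _, rfl⟩ := h1
        rcases h2 with ⟨w, _, h⟩ | ⟨w, _, h⟩
        · exact h10 (Fin.snoc_inj.1 h).2
        · exact h20 (Fin.snoc_inj.1 h).2

def lenf : ℕ → ℕ → ℕ
  | 0, 0 => 1
  | 0, _+1 => 0
  | n+1, 0 => lenf n 0
  | n+1, k+1 => lenf n (k+1) + (lenf n k + lenf n k)

theorem length_enum (n : ℕ) : ∀ (k : ℕ), (enum n k).length = lenf n k := by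
  induction n with
  | zero => intro k; cases k <;> simp [enum, lenf]
  | succ n ih => intro k; cases k <;> simp [enum, lenf, ih]

theorem countP_enum (n k : ℕ) (p : (Fin n → ZMod 3) → Prop) [DecidablePred p] :
    (enum n k).countP (fun u => decide (p u)) =
      (Finset.univ.filter fun u => hammingNorm u = k ∧ p u).card := by
  rw [List.countP_eq_length_filter, ← List.toFinset_card_of_nodup ((nodup_enum n k).filter _)]
  congr 1
  ext u
  simp [mem_enum]

theorem wv_eq (f : ℕ → ℕ → ℕ) (u : Fin 18 → ZMod 3) :
    wv f 18 u = hammingNorm (fun c : Fin 18 => dv (f c) u) := by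
  rw [hn_eq_sum, wv, Finset.sum_range]

theorem card_split {α : Type} [Fintype α] (a g : α → ℕ) (h0 : ∀ u, a u = 0 → g u = 0) :
    (Finset.univ.filter fun u => a u = 1 ∧ g u = 8).card +
    (Finset.univ.filter fun u => a u = 2 ∧ g u = 7).card +
    (Finset.univ.filter fun u => a u = 3 ∧ g u = 6).card +
    (Finset.univ.filter fun u => a u = 4 ∧ g u = 5).card =
    (Finset.univ.filter fun u => a u ≤ 4 ∧ a u + g u = 9).card := by
  simp only [Finset.card_filter, ← Finset.sum_add_distrib]
  apply Finset.sum_congr rfl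
  intro u _
  have := h0 u
  split_ifs <;> omega

theorem card_swap {α : Type} [Fintype α] (a : α → ℕ) (φ ψ χ : α → α) (h1 : ∀ u, χ (φ u) = u)
    (h2 : ∀ u, φ (χ u) = u) (h3 : ∀ u, a (χ u) = a (ψ u)) :
    (Finset.univ.filter fun u => a u + a (φ u) = 9).card =
    (Finset.univ.filter fun u => a u ≤ 4 ∧ a u + a (φ u) = 9).card +
    (Finset.univ.filter fun u => a u ≤ 4 ∧ a u + a (ψ u) = 9).card := by
  classical
  have e : (Finset.univ.filter fun u => a u ≤ 4 ∧ a u + a (ψ u) = 9).card =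
      (Finset.univ.filter fun u => ¬ a u ≤ 4 ∧ a u + a (φ u) = 9).card := by
    apply Finset.card_nbij' χ φ
    · intro u hu
      simp only [Finset.mem_coe, Finset.mem_filter, Finset.mem_univ, true_and] at hu ⊢
      rw [h2, h3]; omega
    · intro u hu
      simp only [Finset.mem_coe, Finset.mem_filter, Finset.mem_univ, true_and] at hu ⊢
      rw [← h3, h1]; omega
    · intro u _; exact h2 u
    · intro u _; exact h1 u
  rw [e]
  simp only [Finset.card_filter, ← Finset.sum_add_distrib]
  apply Finset.sum_congr rfl
  intro u _
  split_ifs <;> omega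

theorem side_spec (f : ℕ → ℕ → ℕ) (hf : ∀ c i, f c i < 3) (K : ℕ → Bool)
    (g : (Fin 18 → ZMod 3) → (Fin 18 → ZMod 3)) (hg : ∀ u c, g u c = dv (f c) u)
    (h : side f K = true) :
    (∀ u, u ≠ 0 → hammingNorm u ≤ 4 → 9 ≤ hammingNorm u + hammingNorm (g u)) ∧
    (∀ u, (hammingNorm u = 1 ∨ hammingNorm u = 2) →
      3 ∣ hammingNorm u + hammingNorm (g u)) ∧
    ∃ r, (r = (Finset.univ.filter fun u : Fin 18 → ZMod 3 =>
      hammingNorm u ≤ 4 ∧ hammingNorm u + hammingNorm (g u) = 9).card ∨ 100000 ≤ r) ∧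
      K r = true := by
  have hW : ∀ u, wv f 18 u = hammingNorm (g u) := by
    intro u
    have e : (fun c : Fin 18 => dv (f c) u) = g u := funext fun c => (hg u c).symm
    rw [wv_eq, e]
  have hle : ∀ u : Fin 18 → ZMod 3, wv f 18 u ≤ 18 := by
    intro u; rw [wv_eq]; exact (hammingNorm_le_card_fintype).trans (by simp)
  have hlt : ∀ u : Fin 18 → ZMod 3, wv f 18 u < 32 := fun u => by have := hle u; omega
  unfold side at h
  have hz : ∀ k, z5 = planes (enum 18 k) (wv f 0) 5 := by
    intro k; rw [← planes_zero (enum 18 k)]; apply planes_congr; intro u; simp [wv]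
  have h0 := fun K => cols_spec (α := Bool) f hf K 18 0
  simp only [← hz] at h0
  rw [h0] at h
  simp only [zero_add] at h
  obtain ⟨a1, n1, b1, h⟩ := fin1_spec _ _ (fun u _ => hlt u) _
    (by rw [length_enum]; decide +kernel) _ (by decide) _ (by decide) _ h
  obtain ⟨a2, n2, b2, h⟩ := fin1_spec _ _ (fun u _ => hlt u) _
    (by rw [length_enum]; decide +kernel) _ (by decide) _ (by decide) _ h
  obtain ⟨a3, n3, b3, h⟩ := fin1_spec _ _ (fun u _ => hlt u) _
    (by rw [length_enum]; decide +kernel) _ (by decide) _ (by decide) _ h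
  obtain ⟨a4, n4, b4, h⟩ := fin1_spec _ _ (fun u _ => hlt u) _
    (by rw [length_enum]; decide +kernel) _ (by decide) _ (by decide) _ h
  simp only [mem_enum, List.mem_cons, List.not_mem_nil, or_false, not_or] at a1 a2 a3 a4
  refine ⟨?_, ?_, _, ?_, h⟩
  · intro u hu hu4
    have h1 : hammingNorm u ≠ 0 := hammingNorm_ne_zero_iff.2 hu
    have h2 : hammingNorm u = 1 ∨ hammingNorm u = 2 ∨ hammingNorm u = 3 ∨ hammingNorm u = 4 := by
      omega
    rw [← hW]
    rcases h2 with h2 | h2 | h2 | h2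
    · have := a1 u h2; omega
    · have := a2 u h2; omega
    · have := a3 u h2; omega
    · have := a4 u h2; omega
  · intro u h2
    rw [← hW]
    have := hle u
    rcases h2 with h2 | h2
    · have := a1 u h2; omega
    · have := a2 u h2; omega
  · rcases b1 with b1 | b1
    swap
    · right; omega
    rcases b2 with b2 | b2
    swap
    · right; omega
    rcases b3 with b3 | b3
    swap
    · right; omega
    rcases b4 with b4 | b4
    swap
    · right; omega
    left
    rw [b1, b2, b3, b4]
    simp only [countP_enum, hW]
    refine card_split (fun u : Fin 18 → ZMod 3 => hammingNorm u) (fun u => hammingNorm (g u)) ?_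
    intro u h2
    have hu := hammingNorm_eq_zero.1 h2
    rw [hammingNorm_eq_zero]; funext c; rw [hg, hu]; simp [dv]

open Matrix in
theorem hn_dot {n : ℕ} (x : Fin n → ZMod 3) : (hammingNorm x : ZMod 3) = x ⬝ᵥ x := by
  rw [hn_eq_sum]
  push_cast
  apply Finset.sum_congr rfl
  intro i _
  generalize x i = y
  revert y; decide

open Matrix in
theorem orth_of (A : Matrix (Fin 18) (Fin 18) (ZMod 3))
    (h : ∀ u : Fin 18 → ZMod 3, (hammingNorm u = 1 ∨ hammingNorm u = 2) →
      3 ∣ hammingNorm u + hammingNorm (u ᵥ* A)) : A * Aᵀ = -1 := by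
  have key : ∀ u : Fin 18 → ZMod 3, (hammingNorm u = 1 ∨ hammingNorm u = 2) →
      (u ᵥ* A) ⬝ᵥ (u ᵥ* A) = - (hammingNorm u : ZMod 3) := by
    intro u hu
    rw [← hn_dot]
    have := (ZMod.natCast_eq_zero_iff _ 3).2 (h u hu)
    push_cast at this
    linear_combination this
  have w1 : ∀ i : Fin 18, hammingNorm (Pi.single i 1 : Fin 18 → ZMod 3) = 1 := by decide
  have w2 : ∀ i j : Fin 18, i ≠ j →
    hammingNorm (Pi.single i 1 + Pi.single j 1 : Fin 18 → ZMod 3) = 2 := by decide +kernel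
  have k1 : ∀ i, A.row i ⬝ᵥ A.row i = -1 := by
    intro i
    have := key _ (Or.inl (w1 i))
    rw [w1, single_one_vecMul] at this
    simpa only [Nat.cast_one] using this
  ext i j
  rw [mul_apply']
  change A.row i ⬝ᵥ A.row j = _
  by_cases hij : i = j
  · subst hij; simp [k1]
  · have := key _ (Or.inr (w2 i j hij))
    rw [w2 i j hij, add_vecMul, single_one_vecMul, single_one_vecMul] at this
    have hc : A.row j ⬝ᵥ A.row i = A.row i ⬝ᵥ A.row j := dotProduct_comm _ _
    change (A.row i + A.row j) ⬝ᵥ (A.row i + A.row j) = _ at this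
    rw [add_dotProduct, dotProduct_add, dotProduct_add, k1, k1, hc] at this
    have hz : (-1 : Matrix (Fin 18) (Fin 18) (ZMod 3)) i j = 0 := by
      rw [Matrix.neg_apply, one_apply_ne hij, neg_zero]
    rw [hz]
    revert this
    generalize A.row i ⬝ᵥ A.row j = y
    revert y; decide

open Matrix in
def app (A : Matrix (Fin 18) (Fin 18) (ZMod 3)) (u : Fin 18 → ZMod 3) : Fin (18 + 18) → ZMod 3 :=
  Fin.append u (u ᵥ* A)

open Matrix in
def code (A : Matrix (Fin 18) (Fin 18) (ZMod 3)) : Submodule (ZMod 3) (Fin (18 + 18) → ZMod 3) where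
  carrier := Set.range (app A)
  add_mem' := by
    rintro _ _ ⟨u, rfl⟩ ⟨v, rfl⟩
    refine ⟨u + v, ?_⟩
    funext i
    refine Fin.addCases (fun i => ?_) (fun i => ?_) i <;> simp only [app, add_vecMul, Fin.append_left, Fin.append_right, Pi.add_apply]
  zero_mem' := by
    refine ⟨0, ?_⟩
    funext i
    refine Fin.addCases (fun i => ?_) (fun i => ?_) i <;>
      simp only [app, zero_vecMul, Fin.append_left, Fin.append_right, Pi.zero_apply]
  smul_mem' := by
    rintro c _ ⟨u, rfl⟩
    refine ⟨c • u, ?_⟩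
    funext i
    refine Fin.addCases (fun i => ?_) (fun i => ?_) i <;> simp only [app, smul_vecMul, Fin.append_left, Fin.append_right, Pi.smul_apply]

open Matrix in
theorem hn_app (A : Matrix (Fin 18) (Fin 18) (ZMod 3)) (u : Fin 18 → ZMod 3) :
    hammingNorm (app A u) = hammingNorm u + hammingNorm (u ᵥ* A) := by
  simp only [hn_eq_sum, Fin.sum_univ_add, app, Fin.append_left, Fin.append_right]

theorem app_inj (A : Matrix (Fin 18) (Fin 18) (ZMod 3)) : Function.Injective (app A) := by
  intro u v h
  funext i
  have := congrFun h (Fin.castAdd 18 i)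
  simpa [app] using this

theorem hn_neg {n : ℕ} (x : Fin n → ZMod 3) : hammingNorm (-x) = hammingNorm x := by
  simp [hammingNorm]

open Matrix in
theorem code_spec (A : Matrix (Fin 18) (Fin 18) (ZMod 3)) (h : A * Aᵀ = -1) (b : ℕ) (hb : 0 < b)
    (h1 : ∀ u : Fin 18 → ZMod 3, u ≠ 0 → hammingNorm u ≤ 4 →
      9 ≤ hammingNorm u + hammingNorm (u ᵥ* A))
    (h2 : ∀ u : Fin 18 → ZMod 3, u ≠ 0 → hammingNorm u ≤ 4 →
      9 ≤ hammingNorm u + hammingNorm (u ᵥ* Aᵀ))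
    (h3 : (Finset.univ.filter fun u : Fin 18 → ZMod 3 =>
      hammingNorm u ≤ 4 ∧ hammingNorm u + hammingNorm (u ᵥ* A) = 9).card +
      (Finset.univ.filter fun u : Fin 18 → ZMod 3 =>
      hammingNorm u ≤ 4 ∧ hammingNorm u + hammingNorm (u ᵥ* Aᵀ) = 9).card = b) :
    ∃ C : Submodule (ZMod 3) (Fin 36 → ZMod 3),
        IsSelfDualCode C ∧ MinWeightNine C ∧ A9 C = b := by
  have h' : Aᵀ * A = -1 := by
    have : A * (-Aᵀ) = 1 := (Matrix.mul_neg A Aᵀ).trans ((congrArg Neg.neg h).trans (neg_neg _))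
    have h5 : (-Aᵀ) * A = 1 := (mul_eq_one_comm (M := Matrix (Fin 18) (Fin 18) (ZMod 3))).1 this
    have h6 : -(Aᵀ * A) = 1 := (Matrix.neg_mul Aᵀ A).symm.trans h5
    exact neg_eq_iff_eq_neg.1 h6
  have r1 : ∀ u, (u ᵥ* A) ᵥ* Aᵀ = -u := by
    intro u; rw [vecMul_vecMul, h, vecMul_neg, vecMul_one]
  have r2 : ∀ u, (u ᵥ* Aᵀ) ᵥ* A = -u := by
    intro u; rw [vecMul_vecMul, h', vecMul_neg, vecMul_one]
  have hcard : A9 (code A) = b := by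
    unfold A9
    have e : {u : Fin 18 → ZMod 3 // hammingNorm u + hammingNorm (u ᵥ* A) = 9} ≃
        {x : Fin 36 → ZMod 3 // x ∈ code A ∧ hammingNorm x = 9} :=
      Equiv.ofBijective (fun u => ⟨app A u.1, ⟨u.1, rfl⟩, by
        have := hn_app A u.1; rw [u.2] at this; exact this⟩) (by
        constructor
        · intro u v huv
          exact Subtype.ext (app_inj A (congrArg Subtype.val huv))
        · rintro ⟨x, ⟨u, rfl⟩, hx⟩
          exact ⟨⟨u, (hn_app A u).symm.trans hx⟩, rfl⟩)
    rw [← Nat.card_congr e, Nat.card_eq_fintype_card, Fintype.card_subtype, ← h3]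
    exact card_swap (fun u : Fin 18 → ZMod 3 => hammingNorm u) (fun u => u ᵥ* A) (fun u => u ᵥ* Aᵀ)
      (fun w => -(w ᵥ* Aᵀ)) (fun u => by simp only [r1, neg_neg])
      (fun u => by simp only [neg_vecMul, r2, neg_neg]) (fun u => hn_neg _)
  have hmin : ∀ u : Fin 18 → ZMod 3, u ≠ 0 → 9 ≤ hammingNorm u + hammingNorm (u ᵥ* A) := by
    intro u hu
    by_cases c1 : hammingNorm u ≤ 4
    · exact h1 u hu c1
    by_cases c2 : hammingNorm (u ᵥ* A) ≤ 4
    · have hne : u ᵥ* A ≠ 0 := by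
        intro h0
        have := r1 u
        rw [h0, zero_vecMul] at this
        exact hu (neg_eq_zero.1 this.symm)
      have := h2 _ hne c2
      rw [r1, hn_neg] at this
      omega
    · omega
  refine ⟨code A, ?_, ⟨?_, ?_⟩, hcard⟩
  · intro x
    have hdot : ∀ (x : Fin (18 + 18) → ZMod 3) (v : Fin 18 → ZMod 3), ∑ i, x i * app A v i =
        (fun i => x (Fin.castAdd 18 i)) ⬝ᵥ v + (fun i => x (Fin.natAdd 18 i)) ⬝ᵥ (v ᵥ* A) := by
      intro x v
      rw [Fin.sum_univ_add]
      simp only [app, dotProduct, Fin.append_left, Fin.append_right]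
    constructor
    · rintro ⟨u, rfl⟩ _ ⟨v, rfl⟩
      refine (hdot (app A u) v).trans ?_
      simp only [app, Fin.append_left, Fin.append_right]
      rw [← mulVec_transpose A v, dotProduct_mulVec, r1, neg_dotProduct]
      simp
    · intro hx
      set u : Fin 18 → ZMod 3 := fun i => x (Fin.castAdd 18 i) with hu
      set w : Fin 18 → ZMod 3 := fun i => x (Fin.natAdd 18 i) with hw
      have e : ∀ v, (u + w ᵥ* Aᵀ) ⬝ᵥ v = 0 := by
        intro v
        have := (hdot x v).symm.trans (hx _ ⟨v, rfl⟩)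
        rw [← mulVec_transpose A v, dotProduct_mulVec, ← add_dotProduct] at this
        exact this
      have e2 : u = -(w ᵥ* Aᵀ) := eq_neg_of_add_eq_zero_left (dotProduct_eq_zero _ e)
      refine ⟨u, ?_⟩
      have e3 : u ᵥ* A = w := by rw [e2, neg_vecMul, r2, neg_neg]
      funext i
      refine Fin.addCases (m := 18) (n := 18) (fun i => ?_) (fun i => ?_) i
      · simp only [app, hu, Fin.append_left]
      · simp only [app, e3, hw, Fin.append_right]
  · have : Nonempty {x : Fin 36 → ZMod 3 // x ∈ code A ∧ hammingNorm x = 9} := by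
      have hp : 0 < A9 (code A) := by omega
      exact (Nat.card_pos_iff.1 hp).1
    obtain ⟨x, hx, hx9⟩ := this
    refine ⟨x, hx, ?_, hx9⟩
    rintro rfl
    simp at hx9
  · rintro _ ⟨_, ⟨u, rfl⟩, hx, rfl⟩
    have hu : u ≠ 0 := by
      rintro rfl
      apply hx
      funext i
      refine Fin.addCases (m := 18) (n := 18) (fun i => ?_) (fun i => ?_) i <;>
      simp only [app, zero_vecMul, Fin.append_left, Fin.append_right, Pi.zero_apply]
    exact (hmin u hu).trans (hn_app A u).ge

open Matrix in
theorem chk_spec (d b : ℕ) (hb : 0 < b) (hb' : b < 1000) (h : chk d b = true) :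
    ∃ C : Submodule (ZMod 3) (Fin 36 → ZMod 3),
        IsSelfDualCode C ∧ MinWeightNine C ∧ A9 C = 8 * b := by
  unfold chk at h
  let A : Matrix (Fin 18) (Fin 18) (ZMod 3) := fun i j => (ent d j i : ZMod 3)
  have hent : ∀ i j, ent d i j < 3 := fun i j => Nat.mod_lt _ (by norm_num)
  obtain ⟨p1, p2, r, hr, h⟩ := side_spec _ (fun c i => hent c i) _ (fun u => u ᵥ* A)
    (fun u c => rfl) h
  obtain ⟨q1, q2, s, hs, h⟩ := side_spec _ (fun c i => hent i c) _ (fun u => u ᵥ* Aᵀ)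
    (fun u c => rfl) h
  have h := Nat.eq_of_beq_eq_true h
  have hr : r = _ := hr.resolve_right (by omega)
  have hs : s = _ := hs.resolve_right (by omega)
  exact code_spec A (orth_of A p2) (8 * b) (by omega) p1 q1 (by rw [← h, hr, hs])

end Codes

set_option maxRecDepth 100000 in
theorem c9 : chk 13675225091911108157002904215011562075046260023319404252594847267769702849492244628266441074862346418694153900293446308426510305035932613792675429544493302 9 = true := by decide +kernel

set_option maxRecDepth 100000 in
theorem c12 : chk 14732774580374542282115959789719165747842638967943975248208495213373327987138513297118826425752654228871494166578078520613687063453295731941341718572555066 12 = true := by decide +kernel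

set_option maxRecDepth 100000 in
theorem c13 : chk 9775011466591030663285947032846122592405935042174390848870748019896739278077990971231349557527741348390021404812604890276215181390850582775522766486638793 13 = true := by decide +kernel

set_option maxRecDepth 100000 in
theorem c14 : chk 5707435766224302715138706013457785876795780805492133325735732714831568519374248182378824024260957015725830664909755531546604199873649052194726458038162062 14 = true := by decide +kernel

set_option maxRecDepth 100000 in
theorem c15 : chk 4071922325013145081844523816409339274636106650978615338338038308028143668836290524643246623601170685579467518653935109596074682386146105875234542069434596 15 = true := by decide +kernel

set_option maxRecDepth 100000 in
theorem c16 : chk 28861921092163758383747656797190168689113412014852316430856938711761215045276559546789604129389737031399120865885462442849453358360230577822493253373760796 16 = true := by decide +kernel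

set_option maxRecDepth 100000 in
theorem c17 : chk 29963314987757928600628436404897835071267608888538300385115130522652777081527048223683282019842414309608127069910935260610698727139367802578427513268675257 17 = true := by decide +kernel

set_option maxRecDepth 100000 in
theorem c18 : chk 30299371339479315820915820816256689834279408606817530250889787116539634249127236486338621293854306114497663412865483238657295087471489318552017311789993827 18 = true := by decide +kernel

set_option maxRecDepth 100000 in
theorem c19 : chk 6929437488116743097578200004276097036129793669167564032681825070472958251633835045710473869380365771792349402641762895077757762951630493584387817060966540 19 = true := by decide +kernel

set_option maxRecDepth 100000 in
theorem c20 : chk 23626789124697085023291005970810689965727996276502219875630093526582388810173243468607106822192975288032286017051894831672164509307924492726129869377247931 20 = true := by decide +kernel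

set_option maxRecDepth 100000 in
theorem c21 : chk 12281973001646391905681127078713734845929414775581881619100986354528349105150932938682950071186874630130208922215155543970331769415190263131400179602344374 21 = true := by decide +kernel

set_option maxRecDepth 100000 in
theorem c22 : chk 33646218414730375043881200801364492452980636681777206283038504148652038027657782398802518377627562505004270640293560412904899169835850003704918411249399364 22 = true := by decide +kernel

set_option maxRecDepth 100000 in
theorem c23 : chk 31938648372127781517307866766812859721124895970583814132005446460561643207833270416127837220011909803861962449766926231678854038818744279666579996129855418 23 = true := by decide +kernel

set_option maxRecDepth 100000 in
theorem c24 : chk 22586552229693401624451489699395869315860947573484290061147387760532029017712246392762032297833805231330167473301771431541820502755499854151173567733573461 24 = true := by decide +kernel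

set_option maxRecDepth 100000 in
theorem c25 : chk 15654619905040820294081078851755939634377367657496764908724520883754734510392003840116498107867431247873488467854739334079511594139336352417263095390482470 25 = true := by decide +kernel

set_option maxRecDepth 100000 in
theorem c26 : chk 23352897110768962254395500854195187022601005339835395670039033886658172283601587158003296422719748528652191604056092903212973147373290906799283670777468838 26 = true := by decide +kernel

set_option maxRecDepth 100000 in
theorem c27 : chk 37720164660900616287832875342475559485141501908215206120848596568767617194247008383414417875423993386472810737299899853259056356996586977181866099672252796 27 = true := by decide +kernel

set_option maxRecDepth 100000 in
theorem c28 : chk 19328152180993436225749635175255823802367750391995304303807416921949700102442186782293094141339923156235730823786264825687951204530861156672615677518369839 28 = true := by decide +kernel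

set_option maxRecDepth 100000 in
theorem c29 : chk 20493704481427959289936301609121872277807774855881175145727150335708608433311992999414919840459349741417212267548900218188844291003618863478380840272394494 29 = true := by decide +kernel

set_option maxRecDepth 100000 in
theorem c30 : chk 12161554724185988276458211814667162138932248380578088288218327707636653843510805273517569056682248650689249196343984619162886190229372874121931750147652784 30 = true := by decide +kernel

set_option maxRecDepth 100000 in
theorem c31 : chk 36412970771541098545795060124967799038502552322366442613248535163321518895671282120491612255092776592139031336728714761957337528173861749081637247557197808 31 = true := by decide +kernel

set_option maxRecDepth 100000 in
theorem c32 : chk 28713504082289040648266936140448016645721285396924438538078313002324553222887530788129027228248767680530420182536921519991728680310690863652275483533215431 32 = true := by decide +kernel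

set_option maxRecDepth 100000 in
theorem c33 : chk 2466159268914508309770610029243509572824887057917420744652149783135574250833675268333509528766857226185241244874401773208647187450209412828565300308985101 33 = true := by decide +kernel

set_option maxRecDepth 100000 in
theorem c34 : chk 35736520491060027459805330002911897714115164830497356717384432311564807085957965638908453328125824664507851559847801154528239052338449543905394842289302922 34 = true := by decide +kernel

set_option maxRecDepth 100000 in
theorem c35 : chk 26664933328532194902960722836930461479007260040824963331419026861428358849139392660957535616397246404407404482098547143002256912968987087482221006040418916 35 = true := by decide +kernel

set_option maxRecDepth 100000 in
theorem c36 : chk 31231053301362182626516359358433868653915450104733808627449841611238560476925861652630836604581143173575768105699675192759689695737295943027498519462066582 36 = true := by decide +kernel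

set_option maxRecDepth 100000 in
theorem c37 : chk 20489084523366470245434076068662864686136318547817469060473366060206201979605565728840377498467131807086394826997007161831554380191172217173678955002850604 37 = true := by decide +kernel

set_option maxRecDepth 100000 in
theorem c38 : chk 29233186650167588116318899942410538173306879812275249872268791381025830316403159221170557002657510960238991242242799338627339773226032639990091090271028821 38 = true := by decide +kernel

set_option maxRecDepth 100000 in
theorem c39 : chk 19676371096213497625779626611535681915168511730384976708753320529821482209121428472051577159972284928236297948641858682733582610865709535083114465191525982 39 = true := by decide +kernel

set_option maxRecDepth 100000 in
theorem c40 : chk 26604398073762373299754131521174905691843246055826624997388562579775625460105651427206359410264474695401508820314832974033506268048354986311483754858145743 40 = true := by decide +kernel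

set_option maxRecDepth 100000 in
theorem c41 : chk 8305213086710906104543504986641975614971405164981309070858353750599840744688577937638605514184636095308120667660031418972098332277347375191216674042258237 41 = true := by decide +kernel

set_option maxRecDepth 100000 in
theorem c42 : chk 21774289187302805195719344911070098179881990324156319797040288987719330013088616634417989637091836926839667757133718172431885171885276764840383290052164587 42 = true := by decide +kernel

set_option maxRecDepth 100000 in
theorem c43 : chk 31632200402070747124985608181798297142931567398778336964544912801637196511774493780473616620276002126284694115108776051602346785381868165683154553861346388 43 = true := by decide +kernel

set_option maxRecDepth 100000 in
theorem c44 : chk 37600010649804715792360820628442104868421274984119089293289729679779509783603088770809125522522341574160396969840295917932479018810893899493558565099923792 44 = true := by decide +kernel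

set_option maxRecDepth 100000 in
theorem c45 : chk 15165476427214292305367375480041914240339066598967295511446590443362211413101987625463702732719168203399917928017984791538765638160855564614407962551431420 45 = true := by decide +kernel

set_option maxRecDepth 100000 in
theorem c46 : chk 19328152134279173990913584259798189154956175241383934862275817483420627724242325920371404601648401525363824181264973976789569425104696673585142296952354701 46 = true := by decide +kernel

set_option maxRecDepth 100000 in
theorem c47 : chk 31211932971985339332814072898994465197292257315641957082442939644026148892090629891802075400163912915343216911924765318391209933540293093760575178980765369 47 = true := by decide +kernel

set_option maxRecDepth 100000 in
theorem c48 : chk 9112437510577138927339498458124435942671221955590522570073655674942138768625258583051270207619419361889955116849196677290447473215082388399500579323381685 48 = true := by decide +kernel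

set_option maxRecDepth 100000 in
theorem c49 : chk 25764618195147645197454712089664032484722923074295398931673934255539401469850396312457489369986063922533076639268611584989231307589087510959029369145178327 49 = true := by decide +kernel

set_option maxRecDepth 100000 in
theorem c50 : chk 21774535371843323389816285054868946434790493650103997537156747506494881850957425447117229752584178442301352807941724781075373121019681332693668646243822321 50 = true := by decide +kernel

set_option maxRecDepth 100000 in
theorem c51 : chk 12074485054733264771562807699732679443916109761730995969144837010299805897545840723202592353755522571675520412680007555151988707841957567374633775443675484 51 = true := by decide +kernel

set_option maxRecDepth 100000 in
theorem c52 : chk 29828989254350473048443630829807625498183730374841277794884258491785725298084825984588786448155838774061477316523331874413143935448338653198747790650525766 52 = true := by decide +kernel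

set_option maxRecDepth 100000 in
theorem c53 : chk 17850370437304736970573776285293802300263371564164328515085532990737122833619566881409850376735717485560942670056792255057035784751702379344401901108454604 53 = true := by decide +kernel

set_option maxRecDepth 100000 in
theorem c54 : chk 3592630242314134691187118106953248501716792330520942116993411583601335380097883480106279746830117135327595240723105527021621965476254507953595904284838436 54 = true := by decide +kernel

set_option maxRecDepth 100000 in
theorem c55 : chk 19328152143005155586364993814328797054318002494474219300859597841484085032452017048174965719308054120574538434450752579733725936689305388069588874879365597 55 = true := by decide +kernel

set_option maxRecDepth 100000 in
theorem c56 : chk 27190132110099337383836318689679171419353540010772514840805561518093342048104170471627038957864072113521551886906335172552028905935238264191592728512284831 56 = true := by decide +kernel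

set_option maxRecDepth 100000 in
theorem c57 : chk 24347318187391195552765182115104760487055672174177621169728766849494479812819534181065183179332694045254903597729785202109753715864752104258547394458654960 57 = true := by decide +kernel

set_option maxRecDepth 100000 in
theorem c58 : chk 36301584837713139023180928041637338188859643412205053953454375272981673569572596737229295000347883694224371016574326356152523408610724778919009279687065385 58 = true := by decide +kernel

set_option maxRecDepth 100000 in
theorem c59 : chk 31496233390629222776968516484066123163010516369172079147118943081540731882389041510874455729686263153171371770158824332057957397010186174605753411605989014 59 = true := by decide +kernel

set_option maxRecDepth 100000 in
theorem c60 : chk 18802322712616305525125431890499757005421496986312061315798560815936470361919201274233074004719464874669589701998164255072871093749462221337476314939274257 60 = true := by decide +kernel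

set_option maxRecDepth 100000 in
theorem c61 : chk 20202718136060770061119830921086255020026895412451220693297103897015729919212951173815464399615602380625523420202790063141194487671899213386669525304038095 61 = true := by decide +kernel

set_option maxRecDepth 100000 in
theorem c62 : chk 13996638612829930379520275214475808892117770748124156430097247777207410449997250117842791235979742293000746192573140827495479393299815315612042507297426856 62 = true := by decide +kernel

set_option maxRecDepth 100000 in
theorem c63 : chk 31693481414867387831845613656611196849943219271513309671400554402462292323927194692107208258681520470904872574074942399444466783097127396555333558600724055 63 = true := by decide +kernel

set_option maxRecDepth 100000 in
theorem c64 : chk 20831723049087350678854712622847489045648800640188168315293068992350662498034664439761763100578052832982068114488342983188448256641210545877362164086460548 64 = true := by decide +kernel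

set_option maxRecDepth 100000 in
theorem c65 : chk 14796701585029556322086235315924458325112802541708674200284622137729969169515885132025093533168178965450932543040158258246418759741718646969914796829931576 65 = true := by decide +kernel

set_option maxRecDepth 100000 in
theorem c66 : chk 14062246172124183495778247613367233075511004727019940939612914412739418296412715914677312042040820580562478400981213154067690465386841092393474453395374993 66 = true := by decide +kernel

set_option maxRecDepth 100000 in
theorem c67 : chk 31279289841497785721035248553201175336628228185865567913208592276974950677039559236183081845701068670795647441923866323678732828885124950517676347630065492 67 = true := by decide +kernel

set_option maxRecDepth 100000 in
theorem c68 : chk 18326187937863664389770922856831705981011225911767924745709070802372503157286562588895604945667866790241202011078791909090037696965704739547160272713710727 68 = true := by decide +kernel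

set_option maxRecDepth 100000 in
theorem c69 : chk 12380256026708241455344801653966318635578346108889724413188158175237483072964879034566706317931366737119144751876682756226908012276201392974088967216611819 69 = true := by decide +kernel

set_option maxRecDepth 100000 in
theorem c70 : chk 254603837926974332349290567841220119714268631234892781959705650064365814260938845230206345195043079551301920142554794995755472459303076438182369015779693 70 = true := by decide +kernel

set_option maxRecDepth 100000 in
theorem c71 : chk 29680505468123613136435767052253000364476034882172977340228007424746758756753806109745484235960258698551250333676829172918555116951291741097792180243108944 71 = true := by decide +kernel

set_option maxRecDepth 100000 in
theorem c72 : chk 22483537857075254305949656609451165005758506348141503929986652976514200081716335311398514332017378738881438194425337954035685805189137450637673652187354972 72 = true := by decide +kernel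

set_option maxRecDepth 100000 in
theorem c73 : chk 30313394576345019894621346470614862457485356239790037779614048503659662672269992094328243906178171195279801538823438073438221532957355241373063624761942757 73 = true := by decide +kernel

set_option maxRecDepth 100000 in
theorem c74 : chk 10288710437860523352984398159964814854345496650977847441843740475857323801389109510758430218295603748899860699112405290064003325911554055421644771791873394 74 = true := by decide +kernel

set_option maxRecDepth 100000 in
theorem c75 : chk 20519394979611296246803762524376671181707292639267713202819461679228864428228417315238931824157809879888728693304198071984785105085427263745218581796017185 75 = true := by decide +kernel

set_option maxRecDepth 100000 in
theorem c76 : chk 33760724185489451527833150674947508407909020163299112614843630711802960451040788021827391407943179430543878570562829496609062927028081681307891826482832365 76 = true := by decide +kernel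

set_option maxRecDepth 100000 in
theorem c77 : chk 20427311806674942627926490220099059951027044799286938809589709372939580661942822407948355831392312673607620273041654937385298546518189122600827419026484692 77 = true := by decide +kernel

set_option maxRecDepth 100000 in
theorem c78 : chk 38201015424385105372288861282379407572997987356096276891605756747727401683640222685706870155829839373847685799668914189319897648275854543158820402281827503 78 = true := by decide +kernel

set_option maxRecDepth 100000 in
theorem c79 : chk 147356754239541259483443389697506415897672509384562789460969081020178511216353008343338761508219423051264937098691013365443119274780606183467922400556010 79 = true := by decide +kernel

set_option maxRecDepth 100000 in
theorem c80 : chk 25536033355593892674353776495037124175548715231558829782308800275313632008710521399215437468391748164316875962650174448462740493839683465274835419118657086 80 = true := by decide +kernel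

set_option maxRecDepth 100000 in
theorem c81 : chk 36721524858605010660574117195410834963141052658262641655897329571117940593013363996295901559683281938091752797891738689052044420350542046335901439861889960 81 = true := by decide +kernel

set_option maxRecDepth 100000 in
theorem c82 : chk 24163381922962152566184111410089904472610561942861287659366251730640370170619731666885625731466611011788313592917835666609412304702181000319233450617414603 82 = true := by decide +kernel

set_option maxRecDepth 100000 in
theorem c83 : chk 24565365838308030029990706835927698401853676727095320770845810237683172399769199339805988618937913008752890478246196730184053140620800410397245888995303906 83 = true := by decide +kernel

set_option maxRecDepth 100000 in
theorem c85 : chk 20046079036530694495434236096834758712905195782643727099222406914319244956030855735407573494975915036632886732054329308161668375514317124188118046173215367 85 = true := by decide +kernel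

set_option maxRecDepth 100000 in
theorem c90 : chk 20445523285601200301311401865767590649638652386252734146869123860165023787393447676664915185412037135203327384667932782460987217121944205133560881494748432 90 = true := by decide +kernel

set_option maxRecDepth 100000 in
theorem c93 : chk 33443979215533295719324422115701888549923738603801358082027146974231771638828811381271457787418032924527941716819311630463879064771459479676941321638139669 93 = true := by decide +kernel

theorem exists_near_extremal_codes :
    ∀ β ∈ ({9} ∪ Finset.Icc 12 83 ∪ {85, 90, 93} : Finset ℕ),
      ∃ C : Submodule (ZMod 3) (Fin 36 → ZMod 3),
        IsSelfDualCode C ∧ MinWeightNine C ∧ A9 C = 8 * β := by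
  intro β hβ
  simp only [Finset.mem_union, Finset.mem_singleton, Finset.mem_Icc, Finset.mem_insert] at hβ
  rcases hβ with (rfl | ⟨h1, h2⟩) | rfl | rfl | rfl
  · exact chk_spec _ _ (by norm_num) (by norm_num) c9
  · interval_cases β
    · exact chk_spec _ _ (by norm_num) (by norm_num) c12
    · exact chk_spec _ _ (by norm_num) (by norm_num) c13
    · exact chk_spec _ _ (by norm_num) (by norm_num) c14
    · exact chk_spec _ _ (by norm_num) (by norm_num) c15
    · exact chk_spec _ _ (by norm_num) (by norm_num) c16
    · exact chk_spec _ _ (by norm_num) (by norm_num) c17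
    · exact chk_spec _ _ (by norm_num) (by norm_num) c18
    · exact chk_spec _ _ (by norm_num) (by norm_num) c19
    · exact chk_spec _ _ (by norm_num) (by norm_num) c20
    · exact chk_spec _ _ (by norm_num) (by norm_num) c21
    · exact chk_spec _ _ (by norm_num) (by norm_num) c22
    · exact chk_spec _ _ (by norm_num) (by norm_num) c23
    · exact chk_spec _ _ (by norm_num) (by norm_num) c24
    · exact chk_spec _ _ (by norm_num) (by norm_num) c25
    · exact chk_spec _ _ (by norm_num) (by norm_num) c26
    · exact chk_spec _ _ (by norm_num) (by norm_num) c27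
    · exact chk_spec _ _ (by norm_num) (by norm_num) c28
    · exact chk_spec _ _ (by norm_num) (by norm_num) c29
    · exact chk_spec _ _ (by norm_num) (by norm_num) c30
    · exact chk_spec _ _ (by norm_num) (by norm_num) c31
    · exact chk_spec _ _ (by norm_num) (by norm_num) c32
    · exact chk_spec _ _ (by norm_num) (by norm_num) c33
    · exact chk_spec _ _ (by norm_num) (by norm_num) c34
    · exact chk_spec _ _ (by norm_num) (by norm_num) c35
    · exact chk_spec _ _ (by norm_num) (by norm_num) c36
    · exact chk_spec _ _ (by norm_num) (by norm_num) c37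
    · exact chk_spec _ _ (by norm_num) (by norm_num) c38
    · exact chk_spec _ _ (by norm_num) (by norm_num) c39
    · exact chk_spec _ _ (by norm_num) (by norm_num) c40
    · exact chk_spec _ _ (by norm_num) (by norm_num) c41
    · exact chk_spec _ _ (by norm_num) (by norm_num) c42
    · exact chk_spec _ _ (by norm_num) (by norm_num) c43
    · exact chk_spec _ _ (by norm_num) (by norm_num) c44
    · exact chk_spec _ _ (by norm_num) (by norm_num) c45
    · exact chk_spec _ _ (by norm_num) (by norm_num) c46
    · exact chk_spec _ _ (by norm_num) (by norm_num) c47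
    · exact chk_spec _ _ (by norm_num) (by norm_num) c48
    · exact chk_spec _ _ (by norm_num) (by norm_num) c49
    · exact chk_spec _ _ (by norm_num) (by norm_num) c50
    · exact chk_spec _ _ (by norm_num) (by norm_num) c51
    · exact chk_spec _ _ (by norm_num) (by norm_num) c52
    · exact chk_spec _ _ (by norm_num) (by norm_num) c53
    · exact chk_spec _ _ (by norm_num) (by norm_num) c54
    · exact chk_spec _ _ (by norm_num) (by norm_num) c55
    · exact chk_spec _ _ (by norm_num) (by norm_num) c56
    · exact chk_spec _ _ (by norm_num) (by norm_num) c57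
    · exact chk_spec _ _ (by norm_num) (by norm_num) c58
    · exact chk_spec _ _ (by norm_num) (by norm_num) c59
    · exact chk_spec _ _ (by norm_num) (by norm_num) c60
    · exact chk_spec _ _ (by norm_num) (by norm_num) c61
    · exact chk_spec _ _ (by norm_num) (by norm_num) c62
    · exact chk_spec _ _ (by norm_num) (by norm_num) c63
    · exact chk_spec _ _ (by norm_num) (by norm_num) c64
    · exact chk_spec _ _ (by norm_num) (by norm_num) c65
    · exact chk_spec _ _ (by norm_num) (by norm_num) c66
    · exact chk_spec _ _ (by norm_num) (by norm_num) c67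
    · exact chk_spec _ _ (by norm_num) (by norm_num) c68
    · exact chk_spec _ _ (by norm_num) (by norm_num) c69
    · exact chk_spec _ _ (by norm_num) (by norm_num) c70
    · exact chk_spec _ _ (by norm_num) (by norm_num) c71
    · exact chk_spec _ _ (by norm_num) (by norm_num) c72
    · exact chk_spec _ _ (by norm_num) (by norm_num) c73
    · exact chk_spec _ _ (by norm_num) (by norm_num) c74
    · exact chk_spec _ _ (by norm_num) (by norm_num) c75
    · exact chk_spec _ _ (by norm_num) (by norm_num) c76
    · exact chk_spec _ _ (by norm_num) (by norm_num) c77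
    · exact chk_spec _ _ (by norm_num) (by norm_num) c78
    · exact chk_spec _ _ (by norm_num) (by norm_num) c79
    · exact chk_spec _ _ (by norm_num) (by norm_num) c80
    · exact chk_spec _ _ (by norm_num) (by norm_num) c81
    · exact chk_spec _ _ (by norm_num) (by norm_num) c82
    · exact chk_spec _ _ (by norm_num) (by norm_num) c83
  · exact chk_spec _ _ (by norm_num) (by norm_num) c85
  · exact chk_spec _ _ (by norm_num) (by norm_num) c90
  · exact chk_spec _ _ (by norm_num) (by norm_num) c93
end

section
/- There exist at least two pairwise inequivalent near-extremal ternary self-dual codes of length 36 with exactly 104 codewords of Hamming weight 9, and at least seven pairwise inequivalent near-extremal ternary self-dual codes of length 36 with exactly 120 codewords of Hamming weight 9. -/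
/-- Two ternary codes of length 36 are equivalent if some monomial transformation
(a permutation of coordinates combined with sign changes) maps one onto the other. -/
def CodeEquiv (C C' : Submodule (ZMod 3) (Fin 36 → ZMod 3)) : Prop :=
  ∃ σ : Equiv.Perm (Fin 36), ∃ ε : Fin 36 → ZMod 3,
    (∀ i, ε i = 1 ∨ ε i = -1) ∧
    ∀ y : Fin 36 → ZMod 3, y ∈ C' ↔ ∃ x ∈ C, y = fun i => ε i * x (σ i)


namespace NEC

abbrev Vec := Fin 36 → ZMod 3

/-! ### Kernel-friendly computations on packed words -/

noncomputable def pk (f : ℕ → ℕ) (o k : ℕ) : ℕ :=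
  Nat.rec (fun _ => 0) (fun _ ih o => Nat.add (f o) (Nat.mul 256 (ih (Nat.succ o)))) k o

def m7 : ℕ := 13652010411249045078775198968736258355698796296397780478757834659812221486618563249927
def m1 : ℕ := 1950287201607006439825028424105179765099828042342540068393976379973174498088366178561
def red (s : ℕ) : ℕ :=
  Nat.sub s (Nat.mul 3 (Nat.land (Nat.shiftRight (Nat.mul 11 s) 5) m7))
def wtc (s : ℕ) : ℕ :=
  Nat.mod (Nat.land (Nat.shiftRight (Nat.add (red s) m1) 1) m1) 255
noncomputable def band (a b : Bool) : Bool := Bool.rec false b a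
noncomputable def bor (a b : Bool) : Bool := Bool.rec b true a
noncomputable def memb (n : ℕ) (l : List ℕ) : Bool :=
  List.rec false (fun a _ ih => bor (Nat.beq n a) ih) l
noncomputable def test (K : List ℕ) (s : ℕ) : Bool :=
  bor (Nat.ble 10 (wtc s)) (memb (red s) K)
noncomputable def go (K : List ℕ) (k : ℕ) : List ℕ → ℕ → Bool :=
  Nat.rec (fun _ _ => true) (fun _ ihk rs => List.rec (fun _ => true)
    (fun r rs ih s => band (ih s) (band (test K (Nat.add s r))
      (band (test K (Nat.add (Nat.add s r) r))
      (band (ihk rs (Nat.add s r)) (ihk rs (Nat.add (Nat.add s r) r)))))) rs) k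
noncomputable def top (K : List ℕ) (rs : List ℕ) : Bool :=
  List.rec true (fun r rs ih => band (test K r) (band (go K 3 rs r) ih)) rs
noncomputable def force (a : ℕ) (k : ℕ → Bool) : Bool :=
  Nat.rec (k 0) (fun m _ => k (Nat.succ m)) a
noncomputable def forceList (l : List ℕ) : (List ℕ → Bool) → Bool :=
  List.rec (fun k => k []) (fun a _ ih k => force a (fun b => ih (fun l => k (b :: l)))) l

theorem pk_zero (f : ℕ → ℕ) (o : ℕ) : pk f o 0 = 0 := rfl
theorem pk_succ (f : ℕ → ℕ) (o k : ℕ) : pk f o (k+1) = f o + 256 * pk f (o+1) k := rfl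

attribute [irreducible] pk

theorem band_iff (a b : Bool) : band a b = true ↔ a = true ∧ b = true := by
  cases a <;> cases b <;> simp [band]
theorem bor_iff (a b : Bool) : bor a b = true ↔ a = true ∨ b = true := by
  cases a <;> cases b <;> simp [bor]
theorem memb_iff (n : ℕ) (l : List ℕ) : memb n l = true ↔ n ∈ l := by
  induction l with
  | nil => simp [memb]
  | cons a l ih =>
    have : memb n (a :: l) = bor (Nat.beq n a) (memb n l) := rfl
    rw [this, bor_iff, ih]; simp
theorem force_eq (a : ℕ) (k : ℕ → Bool) : force a k = k a := by
  cases a <;> rfl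
theorem forceList_eq (l : List ℕ) (k : List ℕ → Bool) : forceList l k = k l := by
  induction l generalizing k with
  | nil => rfl
  | cons a l ih =>
    have : forceList (a :: l) k = force a (fun b => forceList l (fun l => k (b :: l))) := rfl
    rw [this, force_eq, ih]

theorem pk_congr (f g : ℕ → ℕ) (o k : ℕ) (h : ∀ t, o ≤ t → t < o + k → f t = g t) :
    pk f o k = pk g o k := by
  induction k generalizing o with
  | zero => rw [pk_zero, pk_zero]
  | succ k ih =>
    rw [pk_succ, pk_succ, h o le_rfl (by omega), ih (o+1) (fun t h1 h2 => h t (by omega) (by omega))]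

theorem pk_add (f g : ℕ → ℕ) (o k : ℕ) :
    pk f o k + pk g o k = pk (fun t => f t + g t) o k := by
  induction k generalizing o with
  | zero => simp only [pk_zero]; try rfl
  | succ k ih => simp only [pk_succ, ← ih]; ring

theorem pk_mul (c : ℕ) (f : ℕ → ℕ) (o k : ℕ) :
    c * pk f o k = pk (fun t => c * f t) o k := by
  induction k generalizing o with
  | zero => simp only [pk_zero]; try rfl
  | succ k ih => simp only [pk_succ, ← ih]; ring

theorem pk_inj (f g : ℕ → ℕ) (o k : ℕ) (hf : ∀ t, f t < 256) (hg : ∀ t, g t < 256)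
    (h : pk f o k = pk g o k) : ∀ t, o ≤ t → t < o + k → f t = g t := by
  induction k generalizing o with
  | zero => intro t; omega
  | succ k ih =>
    rw [pk_succ, pk_succ] at h
    have h1 := hf o
    have h2 := hg o
    intro t ht1 ht2
    rcases Nat.eq_or_lt_of_le ht1 with rfl | h3
    · omega
    · exact ih (o+1) (by omega) t (by omega) (by omega)

theorem land_split (a b x y : ℕ) (ha : a < 256) (hb : b < 256) :
    (a + 256 * x) &&& (b + 256 * y) = (a &&& b) + 256 * (x &&& y) := by
  have hab : a &&& b < 2 ^ 8 := lt_of_le_of_lt Nat.and_le_left ha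
  apply Nat.eq_of_testBit_eq
  intro i
  rw [show (256:ℕ) = 2 ^ 8 by norm_num] at *
  rw [Nat.testBit_and, add_comm a, add_comm b, add_comm (a &&& b),
    Nat.testBit_two_pow_mul_add _ ha, Nat.testBit_two_pow_mul_add _ hb,
    Nat.testBit_two_pow_mul_add _ hab]
  split <;> simp

theorem pk_shift (j c : ℕ) (hj : j ≤ 8) (hc : c < 2 ^ (8 - j)) (f : ℕ → ℕ) (o k : ℕ)
    (hf : ∀ t, f t < 256) :
    (pk f o k >>> j) &&& pk (fun _ => c) o k = pk (fun t => (f t >>> j) &&& c) o k := by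
  induction k generalizing o with
  | zero => simp [pk_zero]
  | succ k ih =>
    rw [pk_succ, pk_succ, pk_succ, ← ih]
    have h256 : (256:ℕ) = 2 ^ (8 - j) * 2 ^ j := by
      rw [← pow_add, Nat.sub_add_cancel hj]; norm_num
    have hcl : c < 256 := lt_of_lt_of_le hc (by
      rw [h256]; exact Nat.le_mul_of_pos_right _ (by positivity))
    set P := pk f (o+1) k
    -- split the shifted number in low and high byte
    have hP : P = 2 ^ j * (P >>> j) + P % 2 ^ j := by
      rw [Nat.shiftRight_eq_div_pow]; exact (Nat.div_add_mod P (2 ^ j)).symm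
    have hs : (f o + 256 * P) >>> j
        = ((f o >>> j) + 2 ^ (8 - j) * (P % 2 ^ j)) + 256 * (P >>> j) := by
      have h1 : (f o + 256 * P) >>> j = f o >>> j + 2 ^ (8 - j) * P := by
        rw [Nat.shiftRight_eq_div_pow, Nat.shiftRight_eq_div_pow, h256,
          show f o + 2 ^ (8-j) * 2 ^ j * P = f o + 2 ^ (8-j) * P * 2 ^ j by ring,
          Nat.add_mul_div_right _ _ (by positivity)]
      rw [h1]
      conv_lhs => rw [hP]
      rw [h256]; ring
    have hlo : f o >>> j < 2 ^ (8 - j) := by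
      rw [Nat.shiftRight_eq_div_pow, Nat.div_lt_iff_lt_mul (by positivity), ← h256]
      exact hf o
    have hm : P % 2 ^ j < 2 ^ j := Nat.mod_lt _ (by positivity)
    have hlt : (f o >>> j) + 2 ^ (8 - j) * (P % 2 ^ j) < 256 := by
      have : 2 ^ (8-j) * (P % 2 ^ j) + 2 ^ (8-j) ≤ 2 ^ (8-j) * 2 ^ j := by
        rw [← Nat.mul_succ]; exact Nat.mul_le_mul_left _ hm
      omega
    rw [hs, land_split _ _ _ _ hlt hcl]
    congr 1
    apply Nat.eq_of_testBit_eq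
    intro i
    rw [Nat.testBit_and, Nat.testBit_and, add_comm, Nat.testBit_two_pow_mul_add _ hlo]
    split
    · rfl
    · rename_i h
      have : c.testBit i = false := Nat.testBit_lt_two_pow
        (lt_of_lt_of_le hc (Nat.pow_le_pow_right (by norm_num) (by omega)))
      simp [this]

theorem m7_eq : m7 = pk (fun _ => 7) 0 36 := by decide +kernel
theorem m1_eq : m1 = pk (fun _ => 1) 0 36 := by decide +kernel

theorem red_pk (f : ℕ → ℕ) (hf : ∀ t, f t ≤ 16) : red (pk f 0 36) = pk (fun t => f t % 3) 0 36 := by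
  have h1 : red (pk f 0 36) = pk f 0 36 - 3 * (((11 * pk f 0 36) >>> 5) &&& m7) := rfl
  rw [h1, m7_eq, pk_mul, pk_shift 5 7 (by norm_num) (by norm_num), pk_mul]
  · have h2 : pk f 0 36 = pk (fun t => f t % 3) 0 36
        + pk (fun t => 3 * ((11 * f t) >>> 5 &&& 7)) 0 36 := by
      rw [pk_add]
      apply pk_congr
      intro t _ _
      have := hf t
      generalize f t = a at *
      interval_cases a <;> rfl
    omega
  · intro t; have := hf t; omega

theorem pk_mod (f : ℕ → ℕ) (o k : ℕ) :
    pk f o k ≡ ∑ t ∈ Finset.range k, f (o + t) [MOD 255] := by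
  induction k generalizing o with
  | zero => simp [pk_zero]; rfl
  | succ k ih =>
    rw [pk_succ, Finset.sum_range_succ']
    have h := ih (o+1)
    have h2 : 256 * pk f (o+1) k ≡ 1 * ∑ t ∈ Finset.range k, f (o + 1 + t) [MOD 255] :=
      Nat.ModEq.mul (by decide) h
    rw [one_mul] at h2
    have h3 := Nat.ModEq.add_left (f o) h2
    refine h3.trans ?_
    rw [add_comm (f o)]
    simp only [Nat.add_zero]
    have : ∀ t, o + 1 + t = o + (t + 1) := fun t => by ring
    simp only [this]
    rfl

/-! ### Representing vectors -/

def Rep (b n : ℕ) (x : Vec) : Prop :=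
  ∃ f : ℕ → ℕ, (∀ t, f t ≤ b) ∧ n = pk f 0 36 ∧ ∀ i : Fin 36, x i = (f i : ZMod 3)

noncomputable def pkx (x : Vec) : ℕ := pk (fun t => if h : t < 36 then (x ⟨t, h⟩).val else 0) 0 36

theorem Rep.add {b c m n : ℕ} {x y : Vec} (hx : Rep b m x) (hy : Rep c n y) :
    Rep (b + c) (m + n) (x + y) := by
  obtain ⟨f, hf, rfl, hfx⟩ := hx
  obtain ⟨g, hg, rfl, hgx⟩ := hy
  exact ⟨fun t => f t + g t, fun t => Nat.add_le_add (hf t) (hg t), pk_add _ _ _ _,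
    fun i => by simp [hfx, hgx]⟩

theorem rep_pkx (x : Vec) : Rep 2 (pkx x) x := by
  refine ⟨_, ?_, rfl, ?_⟩
  · intro t
    split
    · have := ZMod.val_lt (x ⟨t, by assumption⟩); omega
    · omega
  · intro i; simp

theorem Rep.red {b n : ℕ} {x : Vec} (hb : b ≤ 16) (h : Rep b n x) : red n = pkx x := by
  obtain ⟨f, hf, rfl, hx⟩ := h
  rw [red_pk f (fun t => (hf t).trans hb)]
  apply pk_congr
  intro t _ ht
  have ht : t < 36 := by omega
  simp [ht, hx, ZMod.val_natCast]

theorem hn_eq {n : ℕ} (x : Fin n → ZMod 3) :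
    hammingNorm x = ∑ i, if x i = 0 then 0 else 1 := by
  rw [hammingNorm, Finset.card_filter]
  apply Finset.sum_congr rfl
  intro i _
  by_cases h : x i = 0 <;> simp [h]

theorem Rep.wtc {b n : ℕ} {x : Vec} (hb : b ≤ 16) (h : Rep b n x) : wtc n = hammingNorm x := by
  have h1 : NEC.wtc n = ((((NEC.red n) + m1) >>> 1) &&& m1) % 255 := rfl
  rw [h1, h.red hb]
  obtain ⟨f, hf, hn, hx⟩ := rep_pkx x
  rw [hn, m1_eq, pk_add, pk_shift 1 1 (by norm_num) (by norm_num)]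
  · have h2 := pk_mod (fun t => (f t + 1) >>> 1 &&& 1) 0 36
    have h3 : ∑ t ∈ Finset.range 36, ((f (0 + t) + 1) >>> 1 &&& 1) = hammingNorm x := by
      rw [hn_eq, Finset.sum_range]
      apply Finset.sum_congr rfl
      intro i _
      rw [hx, zero_add]
      have := hf i
      generalize f i = a at *
      interval_cases a <;> decide
    rw [h3] at h2
    have h4 : hammingNorm x ≤ 36 := by
      have := hammingNorm_le_card_fintype (x := x); simpa using this
    have h5 := Nat.mod_eq_of_lt (show hammingNorm x < 255 by omega)
    rw [← h5]; exact h2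
  · intro t; have := hf t; omega

theorem pkx_inj {x y : Vec} (h : pkx x = pkx y) : x = y := by
  have hb : ∀ (x : Vec) (t : ℕ), (if h : t < 36 then (x ⟨t, h⟩).val else 0) < 256 := by
    intro x t
    split
    · have := ZMod.val_lt (x ⟨t, by assumption⟩); omega
    · omega
  have := pk_inj _ _ 0 36 (hb x) (hb y) h
  ext i
  have h2 := this i (by omega) (by omega)
  exact ZMod.val_injective 3 (by simpa using h2)

/-! ### The search -/

def Good (KV : List Vec) (y : Vec) : Prop := 10 ≤ hammingNorm y ∨ y ∈ KV

theorem test_good {KV : List Vec} {b s : ℕ} {x : Vec} (hb : b ≤ 16) (h : Rep b s x)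
    (ht : test (KV.map pkx) s = true) : Good KV x := by
  have : test (KV.map pkx) s = bor (Nat.ble 10 (wtc s)) (memb (red s) (KV.map pkx)) := rfl
  rw [this, bor_iff, memb_iff, h.wtc hb, h.red hb] at ht
  rcases ht with ht | ht
  · left; exact Nat.le_of_ble_eq_true ht
  · right
    obtain ⟨y, hy, hyx⟩ := List.mem_map.1 ht
    rw [← pkx_inj hyx]; exact hy

def lsum (zs : List (ZMod 3 × Vec)) : Vec := (zs.map (fun z => z.1 • z.2)).sum
def lwt (zs : List (ZMod 3 × Vec)) : ℕ := (zs.map (fun z => if z.1 = 0 then 0 else 1)).sum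

theorem lsum_cons (z : ZMod 3 × Vec) (zs) : lsum (z :: zs) = z.1 • z.2 + lsum zs := by
  simp [lsum]
theorem lwt_cons (z : ZMod 3 × Vec) (zs) : lwt (z :: zs) = (if z.1 = 0 then 0 else 1) + lwt zs := by
  simp [lwt]

theorem lsum_zero (zs : List (ZMod 3 × Vec)) (h : lwt zs = 0) : lsum zs = 0 := by
  induction zs with
  | nil => rfl
  | cons z zs ih =>
    rw [lwt_cons] at h
    have h1 : z.1 = 0 := by by_contra h1; simp [h1] at h
    rw [lsum_cons, h1, ih (by omega)]; simp

theorem zmod3_cases (c : ZMod 3) : c = 0 ∨ c = 1 ∨ c = 2 := by revert c; decide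

theorem two_smul' (x : Vec) : (2 : ZMod 3) • x = x + x := by
  ext i; simp [two_mul]

theorem go_spec (KV : List Vec) (k : ℕ) : ∀ (rs : List ℕ) (zs : List (ZMod 3 × Vec)),
    List.Forall₂ (fun r z => Rep 2 r z.2) rs zs → ∀ (s : ℕ) (x : Vec) (b : ℕ), Rep b s x →
    b + 4 * k ≤ 16 → go (KV.map pkx) k rs s = true → lwt zs ≤ k → lwt zs ≠ 0 →
    Good KV (x + lsum zs) := by
  induction k with
  | zero => intros; omega
  | succ k ihk =>
    intro rs zs h
    induction h with
    | nil => intro s x b _ _ _ _ h; simp [lwt] at h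
    | @cons r z rs zs hr hrs ih =>
      intro s x b hs hb hgo h1 h2
      have e : go (KV.map pkx) (k+1) (r :: rs) s = band (go (KV.map pkx) (k+1) rs s)
        (band (test (KV.map pkx) (s + r)) (band (test (KV.map pkx) (s + r + r))
        (band (go (KV.map pkx) k rs (s + r)) (go (KV.map pkx) k rs (s + r + r))))) := rfl
      rw [e] at hgo
      simp only [band_iff] at hgo
      obtain ⟨g1, g2, g3, g4, g5⟩ := hgo
      rw [lwt_cons] at h1 h2
      rw [lsum_cons]
      have r1 := hs.add hr
      have r2 := r1.add hr
      rcases zmod3_cases z.1 with hz | hz | hz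
      · rw [hz, zero_smul, zero_add]
        rw [if_pos hz] at h1 h2
        exact ih s x b hs hb g1 (by omega) (by omega)
      · rw [hz, one_smul, ← add_assoc]
        rw [hz, if_neg (by decide)] at h1
        by_cases h0 : lwt zs = 0
        · rw [lsum_zero zs h0, add_zero]; exact test_good (by omega) r1 g2
        · exact ihk rs zs hrs _ _ _ r1 (by omega) g4 (by omega) h0
      · rw [hz, two_smul', ← add_assoc, ← add_assoc]
        rw [hz, if_neg (by decide)] at h1
        by_cases h0 : lwt zs = 0
        · rw [lsum_zero zs h0, add_zero]; exact test_good (by omega) r2 g3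
        · exact ihk rs zs hrs _ _ _ r2 (by omega) g5 (by omega) h0

theorem lsum_neg (zs : List (ZMod 3 × Vec)) :
    lsum (zs.map fun z => (-z.1, z.2)) = - lsum zs := by
  induction zs with
  | nil => simp [lsum]
  | cons z zs ih => rw [List.map_cons, lsum_cons, lsum_cons, ih, neg_smul, neg_add]

theorem lwt_neg (zs : List (ZMod 3 × Vec)) :
    lwt (zs.map fun z => (-z.1, z.2)) = lwt zs := by
  induction zs with
  | nil => simp [lwt]
  | cons z zs ih => rw [List.map_cons, lwt_cons, lwt_cons, ih]; simp

theorem top_spec (KV : List Vec) (rs : List ℕ) (zs : List (ZMod 3 × Vec))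
    (h : List.Forall₂ (fun r z => Rep 2 r z.2) rs zs) (ht : top (KV.map pkx) rs = true)
    (h1 : lwt zs ≤ 4) (h2 : lwt zs ≠ 0) : Good KV (lsum zs) ∨ Good KV (- lsum zs) := by
  induction h with
  | nil => simp [lwt] at h2
  | @cons r z rs zs hr hrs ih =>
    have e : top (KV.map pkx) (r :: rs) = band (test (KV.map pkx) r)
      (band (go (KV.map pkx) 3 rs r) (top (KV.map pkx) rs)) := rfl
    rw [e] at ht
    simp only [band_iff] at ht
    obtain ⟨g1, g2, g3⟩ := ht
    rw [lwt_cons] at h1 h2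
    rw [lsum_cons]
    rcases zmod3_cases z.1 with hz | hz | hz
    · rw [hz, zero_smul, zero_add]
      rw [if_pos hz] at h1 h2
      exact ih g3 (by omega) (by omega)
    · left
      rw [hz, one_smul]
      rw [hz, if_neg (by decide)] at h1
      by_cases h0 : lwt zs = 0
      · rw [lsum_zero zs h0, add_zero]; exact test_good (by omega) hr g1
      · exact go_spec KV 3 rs zs hrs _ _ _ hr (by omega) g2 (by omega) h0
    · right
      rw [hz, if_neg (by decide)] at h1
      rw [neg_add, ← neg_smul, hz, show (-2 : ZMod 3) = 1 by decide, one_smul]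
      by_cases h0 : lwt zs = 0
      · rw [lsum_zero zs h0, neg_zero, add_zero]; exact test_good (by omega) hr g1
      · rw [← lsum_neg]
        refine go_spec KV 3 rs _ ?_ _ _ _ hr (by omega) g2 (by rw [lwt_neg]; omega)
          (by rw [lwt_neg]; exact h0)
        rw [List.forall₂_map_right_iff]
        exact hrs

end NEC

namespace NEC

/-! ### The codes -/

def lo (j : Fin 18) : Fin 36 := ⟨j, by omega⟩
def hi (i : Fin 18) : Fin 36 := ⟨18 + i, by omega⟩

theorem sum_split {M : Type*} [AddCommMonoid M] (f : Fin 36 → M) :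
    ∑ i, f i = ∑ j, f (lo j) + ∑ i, f (hi i) :=
  Fin.sum_univ_add (a := 18) (b := 18) f

theorem forall_split {P : Fin 36 → Prop} (h1 : ∀ j, P (lo j)) (h2 : ∀ i, P (hi i)) (t : Fin 36) :
    P t := by
  by_cases h : t.1 < 18
  · exact h1 ⟨t.1, h⟩
  · have := h2 ⟨t.1 - 18, by omega⟩
    have e : hi ⟨t.1 - 18, by omega⟩ = t := by ext; simp [hi]; omega
    rwa [e] at this

abbrev Mat := Matrix (Fin 18) (Fin 18) (ZMod 3)

open Matrix

def code (E : Mat) : Submodule (ZMod 3) Vec where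
  carrier := {x | (fun j => x (lo j)) = (fun i => x (hi i)) ᵥ* E}
  add_mem' := by
    intro x y hx hy
    simp only [Set.mem_ofPred_eq] at *
    have h1 : (fun j => (x + y) (lo j)) = (fun j => x (lo j)) + (fun j => y (lo j)) := rfl
    have h2 : (fun j => (x + y) (hi j)) = (fun j => x (hi j)) + (fun j => y (hi j)) := rfl
    rw [h1, h2, add_vecMul, hx, hy]
  zero_mem' := by
    have h1 : (fun j => (0 : Vec) (lo j)) = 0 := rfl
    have h2 : (fun j => (0 : Vec) (hi j)) = 0 := rfl
    simp only [Set.mem_ofPred_eq]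
    rw [h1, h2, zero_vecMul]
  smul_mem' := by
    intro c x hx
    simp only [Set.mem_ofPred_eq] at *
    have h1 : (fun j => (c • x) (lo j)) = c • (fun j => x (lo j)) := rfl
    have h2 : (fun j => (c • x) (hi j)) = c • (fun j => x (hi j)) := rfl
    rw [h1, h2, smul_vecMul, hx]

theorem mem_code (E : Mat) (x : Vec) :
    x ∈ code E ↔ (fun j => x (lo j)) = (fun i => x (hi i)) ᵥ* E := Iff.rfl

theorem dot_split (x y : Vec) : ∑ i, x i * y i =
    (fun j => x (lo j)) ⬝ᵥ (fun j => y (lo j)) + (fun j => x (hi j)) ⬝ᵥ (fun j => y (hi j)) :=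
  sum_split _

theorem mem_hi {E : Mat} (hE : E * Eᵀ = -1) {x : Vec} (hx : x ∈ code E) :
    E *ᵥ (fun j => x (lo j)) = - (fun i => x (hi i)) := by
  rw [mem_code] at hx
  rw [hx, ← mulVec_transpose, mulVec_mulVec, hE, neg_mulVec, one_mulVec]

theorem mul_comm' {E : Mat} (hE : E * Eᵀ = -1) : Eᵀ * E = -1 := by
  have h : E * (-Eᵀ) = 1 := by rw [Matrix.mul_neg, hE, neg_neg]
  have h2 := (mul_eq_one_comm (M := Mat)).1 h
  rw [Matrix.neg_mul] at h2
  exact neg_eq_iff_eq_neg.1 h2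

theorem selfDual {E : Mat} (hE : E * Eᵀ = -1) : IsSelfDualCode (code E) := by
  intro x
  constructor
  · intro hx y hy
    rw [dot_split]
    have h1 := mem_hi hE hy
    rw [mem_code] at hx
    rw [hx, ← dotProduct_mulVec, h1, dotProduct_neg, neg_add_cancel]
  · intro h
    have key : E *ᵥ (fun j => x (lo j)) = - (fun i => x (hi i)) := by
      rw [eq_neg_iff_add_eq_zero]
      apply dotProduct_eq_zero
      intro b
      let y : Vec := fun t => if h : t.1 < 18 then (b ᵥ* E) ⟨t.1, h⟩ else b ⟨t.1 - 18, by omega⟩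
      have y1 : (fun j => y (lo j)) = b ᵥ* E := by
        ext j; simp [y, lo]
      have y2 : (fun j => y (hi j)) = b := by
        ext j; simp [y, hi]
      have hy : y ∈ code E := by rw [mem_code, y1, y2]
      have := h y hy
      rw [dot_split, y1, y2, dotProduct_comm, ← dotProduct_mulVec] at this
      rw [add_dotProduct, dotProduct_comm]
      exact this
    rw [mem_code]
    have h2 : (fun i => x (hi i)) = -(E *ᵥ (fun j => x (lo j))) := by rw [key, neg_neg]
    rw [h2, ← mulVec_transpose, mulVec_neg, mulVec_mulVec, mul_comm' hE, neg_mulVec, one_mulVec,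
      neg_neg]

def sw (x : Vec) : Vec := fun t => x (t + 18)

theorem lo_add (j : Fin 18) : lo j + 18 = hi j := by
  ext; simp [lo, hi, Fin.val_add]; omega
theorem hi_add (j : Fin 18) : hi j + 18 = lo j := by
  ext; simp [lo, hi, Fin.val_add]; omega

theorem sw_mem {E : Mat} (hE : E * Eᵀ = -1) {x : Vec} (hx : x ∈ code E) : sw x ∈ code (-Eᵀ) := by
  rw [mem_code]
  have h1 : (fun j => sw x (lo j)) = (fun i => x (hi i)) := by ext j; simp [sw, lo_add]
  have h2 : (fun j => sw x (hi j)) = (fun i => x (lo i)) := by ext j; simp [sw, hi_add]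
  rw [h1, h2, vecMul_neg, vecMul_transpose, mem_hi hE hx, neg_neg]

theorem hn_split (x : Vec) : hammingNorm x =
    hammingNorm (fun j => x (lo j)) + hammingNorm (fun j => x (hi j)) := by
  simp only [hn_eq]; exact sum_split _

theorem hn_sw (x : Vec) : hammingNorm (sw x) = hammingNorm x := by
  rw [hn_split, hn_split x, add_comm]
  simp only [sw, lo_add, hi_add]

theorem hn_neg (x : Vec) : hammingNorm (-x) = hammingNorm x := by
  simp [hn_eq]

/-! ### Checks -/

def vv (o c n : ℕ) : Vec := fun i => ((Nat.mod (Nat.mul c (Nat.div n (3 ^ ((i.1 + o) % 36)))) 3 : ℕ) : ZMod 3)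
noncomputable def dec (o c n : ℕ) : ℕ :=
  pk (fun t => Nat.mod (Nat.mul c (Nat.div n (Nat.pow 3 (Nat.mod (Nat.add t o) 36)))) 3) 0 36

def kv (o : ℕ) : List ℕ → List Vec
  | [] => []
  | n :: l => vv o 1 n :: vv o 2 n :: kv o l
noncomputable def kn (o : ℕ) (l : List ℕ) : List ℕ :=
  List.rec [] (fun n _ ih => dec o 1 n :: dec o 2 n :: ih) l

theorem dec_eq (o c n : ℕ) : dec o c n = pkx (vv o c n) := by
  apply pk_congr
  intro t _ ht
  have ht : t < 36 := by omega
  simp [ht, vv, ZMod.val_natCast]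
  exact (Nat.mod_mod _ _).symm

theorem kn_eq (o : ℕ) (l : List ℕ) : kn o l = (kv o l).map pkx := by
  induction l with
  | nil => rfl
  | cons n l ih =>
    have : kn o (n :: l) = dec o 1 n :: dec o 2 n :: kn o l := rfl
    rw [this, ih, dec_eq, dec_eq]; rfl

theorem mem_kv (o : ℕ) (l : List ℕ) (x : Vec) :
    x ∈ kv o l ↔ ∃ n ∈ l, x = vv o 1 n ∨ x = vv o 2 n := by
  induction l with
  | nil => simp [kv]
  | cons n l ih => simp [kv, ih, or_assoc]

theorem vv_two (o n : ℕ) : vv o 2 n = - vv o 1 n := by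
  ext i
  have h (a : ℕ) : ((2 * a % 3 : ℕ) : ZMod 3) = - ((1 * a % 3 : ℕ) : ZMod 3) := by
    rw [ZMod.natCast_mod, ZMod.natCast_mod, Nat.cast_mul, Nat.cast_mul]
    have : ((2:ℕ) : ZMod 3) = -1 := by decide
    rw [this]; simp
  exact h _

theorem vv_sw (c n : ℕ) : sw (vv 0 c n) = vv 18 c n := by
  ext t
  simp [sw, vv, Fin.val_add]

theorem sw_sw (x : Vec) : sw (sw x) = x := by
  ext t; simp only [sw]; congr 1
  ext; simp [Fin.val_add]; omega

theorem kv_neg {o : ℕ} {l : List ℕ} {x : Vec} (h : -x ∈ kv o l) : x ∈ kv o l := by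
  rw [mem_kv] at *
  obtain ⟨n, hn, h | h⟩ := h
  · exact ⟨n, hn, Or.inr (by rw [vv_two, ← h, neg_neg])⟩
  · exact ⟨n, hn, Or.inl (by rw [vv_two] at h; exact neg_injective h)⟩

theorem kv_sw {l : List ℕ} {x : Vec} (h : sw x ∈ kv 18 l) : x ∈ kv 0 l := by
  rw [mem_kv] at *
  obtain ⟨n, hn, h⟩ := h
  refine ⟨n, hn, ?_⟩
  rw [← vv_sw, ← vv_sw] at h
  rcases h with h | h
  · left; rw [← sw_sw x, h, sw_sw]
  · right; rw [← sw_sw x, h, sw_sw]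

def nat18 : List ℕ := [0,1,2,3,4,5,6,7,8,9,10,11,12,13,14,15,16,17]

noncomputable def dg (e : ℕ → ℕ → ℕ) (i t : ℕ) : ℕ :=
  Bool.rec (Bool.rec 0 1 (Nat.beq t (Nat.add 18 i))) (e i t) (Nat.ble (Nat.succ t) 18)
noncomputable def rc (e : ℕ → ℕ → ℕ) (i : ℕ) : ℕ := pk (dg e i) 0 36

noncomputable def run (e : ℕ → ℕ → ℕ) (o : ℕ) (l : List ℕ) : Bool :=
  forceList (nat18.map (rc e)) (fun R => forceList (kn o l) (fun K => top K R))

def mat (e : ℕ → ℕ → ℕ) : Mat := fun i j => (e i j : ZMod 3)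

theorem dg_lo (e : ℕ → ℕ → ℕ) (i t : ℕ) (h : t < 18) : dg e i t = e i t := by
  have : Nat.ble (Nat.succ t) 18 = true := Nat.ble_eq_true_of_le (by omega)
  simp [dg, this]
theorem dg_hi (e : ℕ → ℕ → ℕ) (i t : ℕ) : dg e i (18 + t) = if t = i then 1 else 0 := by
  have : Nat.ble (Nat.succ (18 + t)) 18 = false := by
    rw [Bool.eq_false_iff]; intro h; have := Nat.le_of_ble_eq_true h; omega
  by_cases h : t = i
  · subst h; simp [dg, this]
  · have h2 : Nat.beq (18 + t) (18 + i) = false := by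
      rw [Bool.eq_false_iff]; intro h2; have := Nat.eq_of_beq_eq_true h2
      simp at this; exact h this
    simp [dg, this, h, h2]

theorem run_spec (e : ℕ → ℕ → ℕ) (he : ∀ i j, e i j ≤ 2) (o : ℕ) (l : List ℕ)
    (h : run e o l = true) (x : Vec) (hx : x ∈ code (mat e))
    (h4 : hammingNorm (fun i => x (hi i)) ≤ 4) (h0 : x ≠ 0) :
    10 ≤ hammingNorm x ∨ x ∈ kv o l := by
  rw [run, forceList_eq, forceList_eq, kn_eq] at h
  let g : Fin 18 → Vec := fun i t => (dg e i t : ZMod 3)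
  let zs : List (ZMod 3 × Vec) := List.ofFn (fun i => (x (hi i), g i))
  have hrs : nat18.map (rc e) = List.ofFn (fun i : Fin 18 => rc e i) := by
    simp [nat18, List.ofFn_succ]
  have hF : List.Forall₂ (fun r z => Rep 2 r z.2) (nat18.map (rc e)) zs := by
    rw [hrs, List.forall₂_iff_get]
    refine ⟨by simp [zs], ?_⟩
    intro i h1 h2
    simp only [zs, List.get_eq_getElem, List.getElem_ofFn]
    refine ⟨dg e i, ?_, rfl, fun _ => rfl⟩
    intro t
    by_cases ht : t < 18
    · rw [dg_lo _ _ _ ht]; exact he _ _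
    · obtain ⟨s, rfl⟩ := Nat.exists_eq_add_of_le (not_lt.1 ht)
      rw [dg_hi]; split <;> omega
  have hw : lwt zs = hammingNorm (fun i => x (hi i)) := by
    rw [hn_eq, lwt, List.map_ofFn, List.sum_ofFn]; rfl
  have hs : lsum zs = x := by
    rw [lsum, List.map_ofFn, List.sum_ofFn]
    rw [mem_code] at hx
    funext t
    rw [Finset.sum_apply]
    revert t
    apply forall_split
    · intro j
      have this : x (lo j) = _ := congrFun hx j
      rw [this, vecMul, dotProduct]
      apply Finset.sum_congr rfl
      intro i _
      have : dg e i (lo j) = e i j := dg_lo _ _ _ j.2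
      simp [g, this, mat]
    · intro k
      rw [Finset.sum_eq_single k]
      · have : dg e k (hi k) = 1 := by rw [hi, dg_hi]; simp
        simp [g, this]
      · intro i _ hik
        have : dg e i (hi k) = 0 := by
          rw [hi, dg_hi, if_neg]; intro h; exact hik (Fin.ext h.symm)
        simp [g, this]
      · simp
  have hne : lwt zs ≠ 0 := by
    intro h; apply h0; rw [← hs]; exact lsum_zero zs h
  have := top_spec (kv o l) _ zs hF h (by omega) hne
  rw [hs] at this
  rcases this with (this | this) | (this | this)
  · exact Or.inl this
  · exact Or.inr this
  · left; rwa [hn_neg] at this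
  · right; exact kv_neg this

/-- entries of the matrix -/
noncomputable def nth (rows : List ℕ) : ℕ → ℕ :=
  List.rec (fun _ => 0) (fun a _ ih i => Nat.rec a (fun i _ => ih i) i) rows
noncomputable def ent (rows : List ℕ) (i j : ℕ) : ℕ := Nat.mod (Nat.div (nth rows i) (Nat.pow 3 j)) 3
noncomputable def ent' (rows : List ℕ) (i j : ℕ) : ℕ := Nat.mod (Nat.mul 2 (ent rows j i)) 3

theorem ent_le (rows : List ℕ) (i j : ℕ) : ent rows i j ≤ 2 :=
  Nat.le_of_lt_succ (Nat.mod_lt _ (by norm_num))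
theorem ent'_le (rows : List ℕ) (i j : ℕ) : ent' rows i j ≤ 2 :=
  Nat.le_of_lt_succ (Nat.mod_lt _ (by norm_num))

theorem mat_ent' (rows : List ℕ) : mat (ent' rows) = -(mat (ent rows))ᵀ := by
  ext i j
  simp only [mat, neg_apply, transpose_apply]
  have : ent' rows i j = (2 * ent rows j i) % 3 := rfl
  rw [this, ZMod.natCast_mod, Nat.cast_mul]
  have : ((2:ℕ) : ZMod 3) = -1 := by decide
  rw [this]; simp
  rfl

noncomputable def nsum (f : ℕ → ℕ) (l : List ℕ) : ℕ :=
  List.rec 0 (fun a _ ih => Nat.add (f a) ih) l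
noncomputable def nall {α : Type} (f : α → Bool) (l : List α) : Bool :=
  List.rec true (fun a _ ih => band (f a) ih) l

theorem nsum_eq (f : ℕ → ℕ) (l : List ℕ) : nsum f l = (l.map f).sum := by
  induction l with
  | nil => rfl
  | cons a l ih =>
    have : nsum f (a :: l) = f a + nsum f l := rfl
    simp [this, ih]
theorem nall_iff {α : Type} (f : α → Bool) (l : List α) : nall f l = true ↔ ∀ a ∈ l, f a = true := by
  induction l with
  | nil => simp [nall]
  | cons a l ih =>
    have : nall f (a :: l) = band (f a) (nall f l) := rfl
    simp [this, ih, band_iff]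

theorem nsum18 (f : ℕ → ℕ) : nsum f nat18 = ∑ i : Fin 18, f i := by
  rw [nsum_eq, ← List.sum_ofFn]; simp [nat18, List.ofFn_succ]
theorem mem18 (i : Fin 18) : i.1 ∈ nat18 := by
  revert i; decide

noncomputable def sdb (rows : List ℕ) : Bool :=
  nall (fun i => nall (fun k => Nat.beq 0 (Nat.mod (Nat.add (Bool.rec 0 1 (Nat.beq i k))
    (nsum (fun j => Nat.mul (ent rows i j) (ent rows k j)) nat18)) 3)) nat18) nat18

theorem sdb_spec (rows : List ℕ) (h : sdb rows = true) :
    mat (ent rows) * (mat (ent rows))ᵀ = -1 := by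
  ext i k
  rw [sdb, nall_iff] at h
  have h1 := h i (mem18 i)
  rw [nall_iff] at h1
  have h2 := (Nat.eq_of_beq_eq_true (h1 k (mem18 k))).symm
  rw [nsum18] at h2
  have h3 := (ZMod.natCast_eq_zero_iff _ 3).2 (Nat.dvd_of_mod_eq_zero h2)
  rw [mul_apply, neg_apply, one_apply, eq_neg_iff_add_eq_zero, add_comm]
  have h4 : ((Bool.rec 0 1 (Nat.beq i k) : ℕ) : ZMod 3) = if i = k then 1 else 0 := by
    by_cases hik : i = k
    · subst hik; simp
    · have : Nat.beq i.1 k.1 = false := by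
        rw [Bool.eq_false_iff]; intro h; exact hik (Fin.ext (Nat.eq_of_beq_eq_true h))
      simp [this, hik]
  rw [← h4]
  refine Eq.trans ?_ h3
  have h5 : ∀ a b : ℕ, ((Nat.add a b : ℕ) : ZMod 3) = a + b := Nat.cast_add
  have h6 : ∀ a b : ℕ, ((Nat.mul a b : ℕ) : ZMod 3) = a * b := Nat.cast_mul
  rw [h5, Nat.cast_sum]
  simp only [h6]
  rfl

/-- membership of the listed words in the code, and weight nine -/
noncomputable def memc (rows : List ℕ) (n : ℕ) : Bool :=
  band (Nat.beq 9 (wtc (dec 0 1 n)))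
  (nall (fun j => Nat.beq (Nat.mod (Nat.div n (Nat.pow 3 j)) 3)
    (Nat.mod (nsum (fun i => Nat.mul (Nat.mod (Nat.div n (Nat.pow 3 (Nat.add 18 i))) 3)
      (ent rows i j)) nat18) 3)) nat18)

theorem memc_spec (rows : List ℕ) (n : ℕ) (h : memc rows n = true) :
    vv 0 1 n ∈ code (mat (ent rows)) ∧ hammingNorm (vv 0 1 n) = 9 := by
  rw [memc, band_iff, nall_iff] at h
  obtain ⟨h1, h2⟩ := h
  refine ⟨?_, ?_⟩
  · rw [mem_code]
    funext j
    have h3 := Nat.eq_of_beq_eq_true (h2 j (mem18 j))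
    rw [nsum18] at h3
    have h4 : ((Nat.mod (Nat.div n (Nat.pow 3 j)) 3 : ℕ) : ZMod 3) = _ := congrArg (Nat.cast) h3
    have hl : vv 0 1 n (lo j) = ((Nat.mod (Nat.div n (Nat.pow 3 j)) 3 : ℕ) : ZMod 3) := by
      have : (j.1 + 0) % 36 = j := by omega
      simp only [vv, lo, this]
      congr 2
      exact Nat.one_mul _
    have hh : ∀ i, vv 0 1 n (hi i) = ((Nat.mod (Nat.div n (Nat.pow 3 (Nat.add 18 i))) 3 : ℕ) : ZMod 3) := by
      intro i
      have : (18 + i.1 + 0) % 36 = 18 + i := by omega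
      simp only [vv, hi, this]
      congr 2
      exact Nat.one_mul _
    rw [hl, h4]
    have hm : ∀ a : ℕ, ((Nat.mod a 3 : ℕ) : ZMod 3) = a := fun a => ZMod.natCast_mod a 3
    have h6 : ∀ a b : ℕ, ((Nat.mul a b : ℕ) : ZMod 3) = a * b := Nat.cast_mul
    rw [hm, Nat.cast_sum, vecMul, dotProduct]
    apply Finset.sum_congr rfl
    intro i _
    rw [h6, hh]
    rfl
  · rw [dec_eq, (rep_pkx _).wtc (by norm_num)] at h1
    exact (Nat.eq_of_beq_eq_true h1).symm

noncomputable def ndb (l : List ℕ) : Bool :=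
  List.rec true (fun a l ih => band (Bool.rec true false (memb a l)) ih) l
theorem ndb_spec (l : List ℕ) (h : ndb l = true) : l.Nodup := by
  induction l with
  | nil => simp
  | cons a l ih =>
    have : ndb (a :: l) = band (Bool.rec true false (memb a l)) (ndb l) := rfl
    rw [this, band_iff] at h
    rw [List.nodup_cons]
    refine ⟨?_, ih h.2⟩
    rw [← memb_iff]
    intro h3; rw [h3] at h; simp at h

noncomputable def inv (C : Submodule (ZMod 3) Vec) : ℕ :=
  Nat.card {p : Vec × Vec // (p.1 ∈ C ∧ hammingNorm p.1 = 9) ∧ (p.2 ∈ C ∧ hammingNorm p.2 = 9) ∧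
    hammingNorm (p.1 + p.2) = 12}

noncomputable def cntw (w : ℕ → ℕ) (K : List ℕ) : ℕ :=
  nsum (fun a => nsum (fun b => Bool.rec 0 1 (Nat.beq 12 (w (Nat.add a b)))) K) K
noncomputable def cnt (K : List ℕ) : ℕ := cntw wtc K

theorem cntw_spec (w : ℕ → ℕ) (p : Vec → ℕ) (h : Vec → ℕ) (hw : ∀ x y, w (p x + p y) = h (x + y))
    (KV : List Vec) : cntw w (KV.map p) =
    (KV.map fun x => (KV.map fun y => if h (x + y) = 12 then 1 else 0).sum).sum := by
  rw [cntw, nsum_eq, List.map_map]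
  congr 1
  apply List.map_congr_left
  intro x _
  simp only [Function.comp]
  rw [nsum_eq, List.map_map]
  congr 1
  apply List.map_congr_left
  intro y _
  have hadd : ∀ a b : ℕ, Nat.add a b = a + b := fun _ _ => rfl
  simp only [Function.comp]
  rw [hadd, hw]
  generalize h (x + y) = n
  by_cases h : n = 12
  · subst h; rfl
  · have h2 : Nat.beq 12 n = false := by
      rw [Bool.eq_false_iff]; intro h2; exact h (Nat.eq_of_beq_eq_true h2).symm
    simp [h, h2]

theorem wtc_add (x y : Vec) : wtc (pkx x + pkx y) = hammingNorm (x + y) :=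
  ((rep_pkx x).add (rep_pkx y)).wtc (by norm_num)

theorem cnt_spec (KV : List Vec) : cnt (KV.map pkx) =
    (KV.map fun x => (KV.map fun y => if hammingNorm (x + y) = 12 then 1 else 0).sum).sum :=
  cntw_spec wtc pkx hammingNorm wtc_add KV

theorem card_pairs (h : Vec → ℕ) (KV : List Vec) (hnd : KV.Nodup) :
    Nat.card {p : Vec × Vec // p.1 ∈ KV ∧ p.2 ∈ KV ∧ h (p.1 + p.2) = 12} =
    (KV.map fun x => (KV.map fun y => if h (x + y) = 12 then 1 else 0).sum).sum := by
  have : ∀ p : Vec × Vec, (p.1 ∈ KV ∧ p.2 ∈ KV ∧ h (p.1 + p.2) = 12) ↔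
      p ∈ (KV.toFinset ×ˢ KV.toFinset).filter (fun p => h (p.1 + p.2) = 12) := by
    intro p; simp [and_assoc]
  simp only [this]
  rw [Nat.card_eq_fintype_card, Fintype.card_coe, Finset.card_filter, Finset.sum_product,
    List.sum_toFinset _ hnd]
  congr 1
  apply List.map_congr_left
  intro x _
  exact List.sum_toFinset (fun y => if h (x + y) = 12 then 1 else 0) hnd

noncomputable def chk (rows l : List ℕ) (N m : ℕ) : Bool :=
  band (sdb rows) (band (nall (memc rows) l) (forceList (kn 0 l) (fun K =>
    band (ndb K) (band (Nat.beq N K.length) (Nat.beq m (cnt K))))))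

theorem main (rows l : List ℕ) (N m : ℕ) (hN : N ≠ 0) (h1 : run (ent rows) 0 l = true)
    (h2 : run (ent' rows) 18 l = true) (h3 : chk rows l N m = true) :
    (IsSelfDualCode (code (mat (ent rows))) ∧ MinWeightNine (code (mat (ent rows))) ∧
      A9 (code (mat (ent rows))) = N) ∧ inv (code (mat (ent rows))) = m := by
  rw [chk, forceList_eq, band_iff, band_iff, band_iff, band_iff, kn_eq, nall_iff] at h3
  obtain ⟨hsd, hmem, hnd, hlen, hcnt⟩ := h3
  have hE := sdb_spec rows hsd
  set C := code (mat (ent rows)) with hC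
  have hnd : (kv 0 l).Nodup := List.Nodup.of_map _ (ndb_spec _ hnd)
  have hlen : (kv 0 l).length = N := by
    have := Nat.eq_of_beq_eq_true hlen; simpa using this.symm
  have low : ∀ x ∈ C, x ≠ 0 → hammingNorm x ≤ 9 → x ∈ kv 0 l := by
    intro x hx h0 h9
    have hsp := hn_split x
    by_cases h4 : hammingNorm (fun i => x (hi i)) ≤ 4
    · rcases run_spec _ (ent_le rows) 0 l h1 x hx h4 h0 with h | h
      · omega
      · exact h
    · have hs := sw_mem hE hx
      rw [← mat_ent'] at hs
      have h5 : (fun i => sw x (hi i)) = (fun i => x (lo i)) := by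
        ext i; simp [sw, hi_add]
      have h6 : sw x ≠ 0 := by
        intro h; apply h0; rw [← sw_sw x, h]; rfl
      rcases run_spec _ (ent'_le rows) 18 l h2 (sw x) hs (by rw [h5]; omega) h6 with h | h
      · rw [hn_sw] at h; omega
      · exact kv_sw h
  have kvmem : ∀ x ∈ kv 0 l, x ∈ C ∧ hammingNorm x = 9 := by
    intro x hx
    obtain ⟨n, hn, h⟩ := (mem_kv _ _ _).1 hx
    have := memc_spec rows n (hmem n hn)
    rcases h with rfl | rfl
    · exact this
    · rw [vv_two, hn_neg]; exact ⟨C.neg_mem this.1, this.2⟩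
  have iff9 : ∀ x, (x ∈ C ∧ hammingNorm x = 9) ↔ x ∈ kv 0 l := by
    intro x
    refine ⟨fun h => low x h.1 ?_ h.2.le, kvmem x⟩
    rintro rfl
    have := h.2
    simp at this
  refine ⟨⟨selfDual hE, ⟨?_, ?_⟩, ?_⟩, ?_⟩
  · have : kv 0 l ≠ [] := by rintro h; rw [h] at hlen; exact hN hlen.symm
    obtain ⟨x, hx⟩ := List.exists_mem_of_ne_nil _ this
    have := kvmem x hx
    refine ⟨x, this.1, ?_, this.2⟩
    rintro rfl
    have := this.2
    simp at this
  · rintro w ⟨x, hx, h0, rfl⟩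
    by_contra h
    have := (kvmem x (low x hx h0 (by omega))).2
    omega
  · rw [A9]
    simp only [iff9]
    have : ∀ x, x ∈ kv 0 l ↔ x ∈ (kv 0 l).toFinset := by simp
    simp only [this]
    rw [Nat.card_eq_fintype_card, Fintype.card_coe, List.toFinset_card_of_nodup hnd, hlen]
  · rw [Nat.eq_of_beq_eq_true hcnt, cnt_spec, inv]
    simp only [iff9]
    exact card_pairs hammingNorm _ hnd

theorem inv_eq {C C' : Submodule (ZMod 3) Vec} (h : CodeEquiv C C') : inv C = inv C' := by
  obtain ⟨σ, ε, hε, h⟩ := h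
  let T : Vec → Vec := fun x i => ε i * x (σ i)
  have hne : ∀ i, ε i ≠ 0 := by
    intro i; rcases hε i with h | h <;> rw [h] <;> decide
  have hinj : Function.Injective T := by
    intro x y hxy
    funext i
    have := congrFun hxy (σ.symm i)
    simp only [T, Equiv.apply_symm_apply] at this
    exact mul_left_cancel₀ (hne _) this
  have hmem : ∀ x, T x ∈ C' ↔ x ∈ C := by
    intro x
    rw [h]
    constructor
    · rintro ⟨y, hy, hxy⟩
      rw [hinj (show T x = T y from hxy)]; exact hy
    · intro hx; exact ⟨x, hx, rfl⟩
  have hn : ∀ x, hammingNorm (T x) = hammingNorm x := by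
    intro x
    rw [hn_eq, hn_eq, ← Equiv.sum_comp σ (fun i => if x i = 0 then 0 else 1)]
    apply Finset.sum_congr rfl
    intro i _
    simp [T, hne]
  have hadd : ∀ x y, T x + T y = T (x + y) := by
    intro x y; funext i; simp [T, mul_add]
  let e : Vec ≃ Vec := Equiv.ofBijective T (Finite.injective_iff_bijective.1 hinj)
  have he : ∀ x, e x = T x := fun _ => rfl
  unfold inv
  apply Nat.card_congr
  refine (Equiv.prodCongr e e).subtypeEquiv ?_
  rintro ⟨x, y⟩
  simp only [Equiv.prodCongr_apply, Prod.map, he, hadd, hn, hmem]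

end NEC

namespace NEC

/-! ### The nine codes -/

def rows1 : List ℕ := [
  194324536, 40798812, 140745557, 188337030, 30114667, 323528511, 230726991, 341821334,
  251141352, 174936367, 138451494, 368342687, 42913523, 148869726, 80113708, 265259820,
  367829343, 329178492]
def words1 : List ℕ := [
  50031545428178199, 16677182067495912, 66708726958387260, 116740271951256231,
  45174886789797093, 2349531313988141, 11764037483043996, 53971719562662652, 1377785551463632,
  54985735743249501, 18125292105120906, 106081412615038440, 18328578581083167, 414073091474196,
  33973009637695920, 211194546090228, 100132295898097238, 35223210116951898, 413205130866576,
  206215671067920, 1768062768378, 44563995190150687, 691390997057296, 50100461478897178,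
  2639630069768, 1372799583516888, 137274791208702, 100063679552251166, 22396381004405521,
  9295604625795426, 55821069331238808, 11119001009800968, 100520690059167336, 116385583671,
  11735910755543253, 6822766538918223, 48976535958813, 45758263736234, 44541123074868663,
  7465460335156134, 103161625073260182, 18538392733048059, 633019166618211, 53742857928377202,
  3706333669935837, 33369635931663720, 38795194557, 3911970251849932, 84767602997871,
  2411422124523680, 11133374016480030, 3728920150127682]
theorem left1 : run (ent rows1) 0 words1 = true := by decide +kernel
theorem right1 : run (ent' rows1) 18 words1 = true := by decide +kernel
theorem chk1 : chk rows1 words1 104 1440 = true := by decide +kernel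
theorem main1 : (IsSelfDualCode (code (mat (ent rows1))) ∧ MinWeightNine (code (mat (ent rows1))) ∧
    A9 (code (mat (ent rows1))) = 104) ∧ inv (code (mat (ent rows1))) = 1440 :=
  main rows1 words1 104 1440 (by norm_num) left1 right1 chk1

def rows2 : List ℕ := [
  101660764, 385143294, 302587859, 134234486, 50213239, 157797428, 32905002, 62835581,
  224518147, 279170617, 97448782, 299484401, 114052628, 263046156, 85200579, 255601737,
  313501428, 165132594]
def words2 : List ℕ := [
  105622150856620590, 35207383747836060, 17569376605508734, 6405501887422029, 52098082017442194,
  16679723565499108, 6177581251626977, 103357630741463630, 100078435680168799,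
  33428171656889523, 31443823366038, 33977152214443392, 11142724143733020, 10481274632007,
  100203750826218198, 11325717404814464, 3714241381598391, 102259461034735947, 71176017075554,
  33401250275406066, 4941955550141219, 3775051082440782, 33768502859094876, 30694167871781,
  50049530072001189, 33400183237930359, 1715760865824390, 1259072131769739, 11270916703529622,
  23472531781980373, 160170179796882, 11187348955975782, 1245578181858487, 16683176691021114,
  111196484610642813, 116570542014, 116740388143067031, 9265217175018288, 460758800147230,
  434659533878391, 3894138846060813, 50451235809589593, 8441850656944071, 3797558409665823,
  53390059932294, 51064411222569789, 5561058897007038, 137128585068213631, 100063129055023359,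
  38913462714355677, 1853059061224314, 702440999277180]
theorem left2 : run (ent rows2) 0 words2 = true := by decide +kernel
theorem right2 : run (ent' rows2) 18 words2 = true := by decide +kernel
theorem chk2 : chk rows2 words2 104 2208 = true := by decide +kernel
theorem main2 : (IsSelfDualCode (code (mat (ent rows2))) ∧ MinWeightNine (code (mat (ent rows2))) ∧
    A9 (code (mat (ent rows2))) = 104) ∧ inv (code (mat (ent rows2))) = 2208 :=
  main rows2 words2 104 2208 (by norm_num) left2 right2 chk2

def rows3 : List ℕ := [
  34837049, 103980437, 311410601, 158860113, 89160579, 266419584, 109764800, 328762960,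
  211447903, 246922492, 353878429, 286262140, 322985326, 193583561, 194391619, 195755097,
  200376974, 214772588]
def words3 : List ℕ := [
  9412529163564186, 83478262966529274, 3137509849973931, 27826087655509758, 50380063161491556,
  1045836617012028, 51930413275285208, 3706981819946064, 206267865838551, 2918444985090,
  100200382387641648, 17310137887391175, 138139426900020, 1235660864751867, 231529461351993,
  549053566822279, 33400127591333085, 5770045962463725, 46046733913180, 826305141449392,
  100071636308105913, 50077302328663722, 11133375863777695, 152515780958997, 101917808474789106,
  1029553336672593, 16266061924513705, 38913615783711450, 78246447566593725, 145580222846385,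
  100269895125887993, 33357212231487840, 16692434109554574, 3711125416712253, 50838593652999,
  33972602824929702, 7435052858085652, 50237468790181523, 105484922553146814, 12971205261237150,
  75976433533134516, 116969090059203, 133417758195930771, 13184722838754, 11256237355556880,
  11392643032650463, 5564144703184858, 1237041805570751, 16946198238384, 694023911341353,
  2478350952695703, 116740282879481150, 85055925195318879, 4323735345182229, 25325477844378172,
  47375330272110, 38989696863062, 44609752676861196, 141561519163857, 3752079118518960]
theorem left3 : run (ent rows3) 0 words3 = true := by decide +kernel
theorem right3 : run (ent' rows3) 18 words3 = true := by decide +kernel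
theorem chk3 : chk rows3 words3 120 3336 = true := by decide +kernel
theorem main3 : (IsSelfDualCode (code (mat (ent rows3))) ∧ MinWeightNine (code (mat (ent rows3))) ∧
    A9 (code (mat (ent rows3))) = 120) ∧ inv (code (mat (ent rows3))) = 3336 :=
  main rows3 words3 120 3336 (by norm_num) left3 right3 chk3

def rows4 : List ℕ := [
  89543851, 268101570, 29465190, 87864860, 263593123, 15406222, 224229241, 285266506, 80427828,
  240753501, 335901439, 233394780, 210498402, 245136872, 349052282, 271783699, 40511577,
  121534004]
def words4 : List ℕ := [
  3873897751685061, 5162623683680736, 86517633954745, 1903951653399917, 26360310442671,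
  51268680622023345, 206550226817313, 100131751987247531, 1291299250561687, 101715334382215494,
  28839211318734, 634650551133548, 8786770147557, 17089560207341115, 55659246504390875,
  33377250920519265, 430433083521048, 83799395805008439, 140095534933458, 9613070439578,
  211550183711425, 34384017816312813, 18553082296916403, 11125750564942934, 183865381298604,
  100133418897649233, 50037762038776957, 77827416279272754, 140371097150243, 61355623616374212,
  1855816591559094, 102533902343371504, 26010914184098147, 6184360765992852, 3708583521647887,
  115232456724219, 61288460432868, 16816420624653738, 33377806299570462, 9471087468364356,
  45707989435631451, 120446334359425935, 618605530696359, 50100274311735879, 34177967448145038,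
  8670304986312798, 11194377524197383, 2061453588840945, 157596227147764, 1236194636002317,
  38411077011252, 5742640281888054, 103151488976755983, 5566885303024809, 15235996478543817,
  40148778248771175, 68561848749986271, 206202102022683, 16700091437421954, 111387115636682877]
theorem left4 : run (ent rows4) 0 words4 = true := by decide +kernel
theorem right4 : run (ent' rows4) 18 words4 = true := by decide +kernel
theorem chk4 : chk rows4 words4 120 3360 = true := by decide +kernel
theorem main4 : (IsSelfDualCode (code (mat (ent rows4))) ∧ MinWeightNine (code (mat (ent rows4))) ∧
    A9 (code (mat (ent rows4))) = 120) ∧ inv (code (mat (ent rows4))) = 3360 :=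
  main rows4 words4 120 3360 (by norm_num) left4 right4 chk4

def rows5 : List ℕ := [
  241031250, 336204703, 233774589, 313903280, 166869593, 113189019, 127272707, 381288138,
  369023437, 332229334, 222377008, 280241977, 136890964, 23785302, 70293753, 210879802,
  245218189, 348766977]
def words5 : List ℕ := [
  3850926732577377, 11280800560499352, 1283642373154989, 33423841089235761, 3760266853499784,
  427881049154842, 554974040071875, 11141280363078587, 33430901846845239, 1253422284499928,
  50036911360655374, 50079275949417796, 26148267976599981, 3729011447265076, 22307791082347134,
  16705518811026192, 9265760077245554, 108710549146521909, 3157028783422656, 1243003815755511,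
  7573096972333317, 5705672881893003, 36236849715683964, 1052343185910731, 414334605428498,
  2524365657444439, 1901890960631001, 61973234249497929, 50245065406240427, 978621830699571,
  50032396137516195, 702405744904947, 16745972481875772, 50031747592547492, 120652204828570353,
  116742814956048249, 100320667097711049, 16677465379172065, 234135506404828, 1235473495021980,
  5581990827645975, 50032257651490520, 16677249197870124, 1240533147804246, 11163997922526162,
  140211861688261161, 5696321737942113, 38914271652016083, 100209671600987565,
  133434682186538214, 411824498340660, 100063488098017233, 1853215931904120, 206965578427959,
  1860663738001194, 16745861308170978, 5559083324059887, 620331876743814, 413511049268082,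
  3721332640842054]
theorem left5 : run (ent rows5) 0 words5 = true := by decide +kernel
theorem right5 : run (ent' rows5) 18 words5 = true := by decide +kernel
theorem chk5 : chk rows5 words5 120 3168 = true := by decide +kernel
theorem main5 : (IsSelfDualCode (code (mat (ent rows5))) ∧ MinWeightNine (code (mat (ent rows5))) ∧
    A9 (code (mat (ent rows5))) = 120) ∧ inv (code (mat (ent rows5))) = 3168 :=
  main rows5 words5 120 3168 (by norm_num) left5 right5 chk5

def rows6 : List ℕ := [
  227511009, 296174693, 114214542, 341580016, 249366901, 361743096, 14250285, 41687245,
  124531752, 373594529, 345411170, 260861820, 257242871, 385369549, 381798383, 370554172,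
  337351522, 236682876]
def words6 : List ℕ := [
  22304872643823683, 7434957547941470, 35367521135744340, 2478319182647399, 11789173711914780,
  826106394216042, 3929724570638260, 100269828618706545, 101304368010847770, 133417736027224097,
  105691063571516593, 33768122670636641, 103975115851554189, 104455528493003309,
  101932020718173300, 134652832029255773, 34818509497668012, 34045782330398329, 91632832351038,
  44884277343085500, 111600629653190535, 11348594110133262, 145085154825330, 30544406236215,
  64855710125652492, 87094494228666786, 103777324782115464, 50031925168249227, 1868463286465056,
  48361718275110, 100081137889718424, 10181597531274, 100064432767832505, 21618570042060825,
  34660883685045717, 29031498076222262, 69573087624510, 16814475000967348, 628061950751526,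
  622821095488352, 16120701544239, 33360379296572808, 3394123946937, 1922032047852550,
  33491977534515825, 7206190014020275, 11553627895015239, 9677166025584324, 137731893828084,
  23191158170700, 5604825000322935, 259469735599206, 209353983583842, 207607031829693,
  1883620606292568, 5373695967282, 11120126432190936, 1131374648979, 777843960835608,
  11301159123056214]
theorem left6 : run (ent rows6) 0 words6 = true := by decide +kernel
theorem right6 : run (ent' rows6) 18 words6 = true := by decide +kernel
theorem chk6 : chk rows6 words6 120 3744 = true := by decide +kernel
theorem main6 : (IsSelfDualCode (code (mat (ent rows6))) ∧ MinWeightNine (code (mat (ent rows6))) ∧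
    A9 (code (mat (ent rows6))) = 120) ∧ inv (code (mat (ent rows6))) = 3744 :=
  main rows6 words6 120 3744 (by norm_num) left6 right6 chk6

def rows7 : List ℕ := [
  248019760, 356639520, 295608296, 112514624, 336481719, 235135620, 70196822, 210589009,
  245407963, 348803402, 271570686, 40401064, 310332838, 155626097, 79457074, 237840512,
  326632489, 205057220]
def words7 : List ℕ := [
  66708726897557070, 22236242299539741, 7412080895653167, 2470693760670258, 100268981478442649,
  823564587066747, 1306519122958524, 16816984337783368, 435506503282038, 5605661446104936,
  5315888735763498, 83953591866672779, 50039453178697287, 1868553944154181, 15536166372637677,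
  101766422732555697, 77878814966494443, 26096771600382420, 7412175257309154, 1342199329455240,
  5177909735639, 2470725085769718, 447399776485080, 1726098697991, 823575028589906,
  50043417603274962, 575366586957, 100268984830164742, 68634137972727, 16681139201091654,
  83607211246177730, 487351371216546, 38913636659741794, 133417455022126443, 22878174776778,
  5628821953666977, 50237657060812953, 137366522177419, 15451362347451, 1904975256339,
  127863530236027350, 50056734801342123, 11306321484125076, 9883159049620224, 12971212219914417,
  44472485136161350, 7626058258926, 2013440596106598, 116740345507572182, 51495775310469657,
  628238783525553, 1029553677975106, 45788841080343, 5150454115817, 634992106164,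
  42621176745342450, 16754020358121270, 3431553219527526, 3768774086144871, 4323737406814800]
theorem left7 : run (ent rows7) 0 words7 = true := by decide +kernel
theorem right7 : run (ent' rows7) 18 words7 = true := by decide +kernel
theorem chk7 : chk rows7 words7 120 3192 = true := by decide +kernel
theorem main7 : (IsSelfDualCode (code (mat (ent rows7))) ∧ MinWeightNine (code (mat (ent rows7))) ∧
    A9 (code (mat (ent rows7))) = 120) ∧ inv (code (mat (ent rows7))) = 3192 :=
  main rows7 words7 120 3192 (by norm_num) left7 right7 chk7

def rows8 : List ℕ := [
  121679083, 363975096, 316552141, 174815446, 137025121, 23655603, 375048522, 349772419,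
  275006993, 50180002, 150010023, 63672462, 324489143, 198627182, 208461786, 239026294,
  329658395, 214665648]
def words8 : List ℕ := [
  5765045843073468, 2080187680013118, 50031921703960647, 417524999751767, 33493977736729056,
  101916141897111556, 16814473846204488, 50101901435194668, 100687855972075416,
  11233101336583581, 33972047299214332, 5604824744364026, 3812809331987625, 16700634069834735,
  33699785269263462, 17927884563483804, 11743807161582423, 206089966854666, 206654881407795,
  11324015766405263, 5635320114285474, 1868274914788251, 1270936444349926, 111296163668062914,
  11400365957352264, 11532919483351323, 4051768998745080, 5975961521161268, 100063156476252753,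
  100131786872465076, 103769131742769861, 37167163313694867, 1878440038095158, 622758433715286,
  423645481450461, 1853115509234208, 1858199358638458, 5833771786104633, 61292200195991262,
  103794581935204488, 53875757450271321, 101345049744986070, 51886271517990606,
  33354385750187430, 33377262290821692, 34589710580923287, 12389054438074950, 626146679719346,
  207586144571762, 50035499504753428, 617705427847915, 619399786213305, 101939050416179403,
  20430733398663754, 34598193978401496, 17958585945542976, 33781683248328690, 17295423839330202,
  11118128583749861, 11125754096940564]
theorem left8 : run (ent rows8) 0 words8 = true := by decide +kernel
theorem right8 : run (ent' rows8) 18 words8 = true := by decide +kernel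
theorem chk8 : chk rows8 words8 120 3408 = true := by decide +kernel
theorem main8 : (IsSelfDualCode (code (mat (ent rows8))) ∧ MinWeightNine (code (mat (ent rows8))) ∧
    A9 (code (mat (ent rows8))) = 120) ∧ inv (code (mat (ent rows8))) = 3408 :=
  main rows8 words8 120 3408 (by norm_num) left8 right8 chk8

def rows9 : List ℕ := [
  50590472, 151771416, 68426658, 204216364, 226291485, 291453968, 109402924, 327145892,
  206596699, 232369610, 310751223, 156881252, 166716386, 112727941, 338183096, 239708311,
  332765869, 223986613]
def words9 : List ℕ := [
  116925837741585, 38975279247195, 74561656270488, 84164016594736, 12991759749065,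
  24853885423496, 34932956222435829, 434753246277396, 100177568303642595, 78892245327700,
  11257170769304595, 111638778819549653, 50039202093029073, 33392522768057526, 26297415286380,
  3752390256434865, 23065016050502352, 87107210617453401, 1319238971938053, 16679734160149611,
  11130840922862503, 8765933881329, 11545353625960776, 107682798504135315, 29035736872484467,
  439746323979351, 5559911386716537, 3710280307975371, 140088589511382, 1304074895560005,
  16679915471024982, 53742735553100194, 135888725988679636, 183862808054733, 9678578957495308,
  50040866581225588, 1853303795748840, 1236760102658457, 103906486895760954, 434691631853335,
  5559971823674994, 2470830890181165, 17914245184367217, 45364684087588311, 100269184743427707,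
  754934801570398, 480695458560048, 61287602684911, 53120477330102196, 16680288860409015,
  138366655038906678, 34635495631920318, 50039181555064866, 1853324070010867, 823610296727055,
  5971415061455739, 14824419963860511, 115116021183163968, 44472695419929060,
  133417521401777100]
theorem left9 : run (ent rows9) 0 words9 = true := by decide +kernel
theorem right9 : run (ent' rows9) 18 words9 = true := by decide +kernel
theorem chk9 : chk rows9 words9 120 3240 = true := by decide +kernel
theorem main9 : (IsSelfDualCode (code (mat (ent rows9))) ∧ MinWeightNine (code (mat (ent rows9))) ∧
    A9 (code (mat (ent rows9))) = 120) ∧ inv (code (mat (ent rows9))) = 3240 :=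
  main rows9 words9 120 3240 (by norm_num) left9 right9 chk9

def invs : Fin 7 → ℕ := ![3336, 3360, 3168, 3744, 3192, 3408, 3240]

theorem invs_inj : ∀ j k, j ≠ k → invs j ≠ invs k := by decide

noncomputable def fam : Fin 7 → Submodule (ZMod 3) Vec := ![code (mat (ent rows3)),
  code (mat (ent rows4)), code (mat (ent rows5)), code (mat (ent rows6)), code (mat (ent rows7)),
  code (mat (ent rows8)), code (mat (ent rows9))]

theorem fam_spec (j : Fin 7) : (IsSelfDualCode (fam j) ∧ MinWeightNine (fam j) ∧
    A9 (fam j) = 120) ∧ inv (fam j) = invs j :=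
  match j with
  | 0 => main3
  | 1 => main4
  | 2 => main5
  | 3 => main6
  | 4 => main7
  | 5 => main8
  | 6 => main9

end NEC

theorem inequivalent_near_extremal_codes :
    (∃ C₁ C₂ : Submodule (ZMod 3) (Fin 36 → ZMod 3),
      (IsSelfDualCode C₁ ∧ MinWeightNine C₁ ∧ A9 C₁ = 104) ∧
      (IsSelfDualCode C₂ ∧ MinWeightNine C₂ ∧ A9 C₂ = 104) ∧
      ¬ CodeEquiv C₁ C₂) ∧
    (∃ C : Fin 7 → Submodule (ZMod 3) (Fin 36 → ZMod 3),
      (∀ j, IsSelfDualCode (C j) ∧ MinWeightNine (C j) ∧ A9 (C j) = 120) ∧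
      ∀ j k, j ≠ k → ¬ CodeEquiv (C j) (C k)) := by
  refine ⟨⟨NEC.code (NEC.mat (NEC.ent NEC.rows1)), NEC.code (NEC.mat (NEC.ent NEC.rows2)),
    NEC.main1.1, NEC.main2.1, ?_⟩, NEC.fam, fun j => (NEC.fam_spec j).1, ?_⟩
  · intro h
    have := NEC.inv_eq h
    rw [NEC.main1.2, NEC.main2.2] at this
    exact absurd this (by norm_num)
  · intro j k hjk h
    have := NEC.inv_eq h
    rw [(NEC.fam_spec j).2, (NEC.fam_spec k).2] at this
    exact NEC.invs_inj j k hjk this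
end
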